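/- Let α ∈ (1,2), let f, g ∈ L^α(S, μ) be nonzero and satisfy Assumptions (A1) and (A2) with constants ε₁, ε₂, and let ξ, η be jointly SαS with spectral pair (f, g). Let b ≥ 1, β ∈ (0, α/2), let K satisfy Assumptions (K1) and (K2) with exponent β and threshold x₀ = b, set K_b(x) := K(x)·1_{{|x|>b}}, and let L ∈ L¹(ℝ, dx). Then |Cov(K_b(ξ), L(η))| ≤ C b^{β−1} log(b+1) ‖L‖_{L¹} ([g,f]₁* + [f,g]₂), where the constant C depends only on ε₁, ε₂, α, β, ‖f‖_α, ‖g‖_α and the constant in (K1). (Paper's Theorem 2.3.) -/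

import Mathlib

open MeasureTheory Real Set Filter
open scoped ENNReal Topology

noncomputable def nrm (α : ℝ) {S : Type*} [MeasurableSpace S] (μ : Measure S) (f : S → ℝ) : ℝ :=
  (∫ s, |f s| ^ α ∂μ) ^ (1 / α)

noncomputable def dep2 (α : ℝ) {S : Type*} [MeasurableSpace S] (μ : Measure S) (f g : S → ℝ) : ℝ :=
  ∫ s, |f s * g s| ^ (α / 2) ∂μ

noncomputable def dep1s (α : ℝ) {S : Type*} [MeasurableSpace S] (μ : Measure S) (f g : S → ℝ) : ℝ :=
  ∫ s, |f s| ^ (α - 1) * |g s| ∂μ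

noncomputable def dep1 (α : ℝ) {S : Type*} [MeasurableSpace S] (μ : Measure S) (f g : S → ℝ) : ℝ :=
  dep1s α μ f g + dep1s α μ g f

/-- `f ∈ L^α(S, μ)`. -/
def MemLalpha (α : ℝ) {S : Type*} [MeasurableSpace S] (μ : Measure S) (f : S → ℝ) : Prop :=
  AEStronglyMeasurable f μ ∧ Integrable (fun s => |f s| ^ α) μ

/-- Assumption (A1) with constant ε₁. -/
def A1 (α ε₁ : ℝ) {S : Type*} [MeasurableSpace S] (μ : Measure S) (f g : S → ℝ) : Prop :=
  nrm α μ f ^ (α / 2) * nrm α μ g ^ (α / 2) - dep2 α μ f g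
    ≥ ε₁ * (nrm α μ f ^ (α / 2) * nrm α μ g ^ (α / 2))

/-- Assumption (A2) with constant ε₂. -/
def A2 (α ε₂ : ℝ) {S : Type*} [MeasurableSpace S] (μ : Measure S) (f g : S → ℝ) : Prop :=
  ∀ u v : ℝ, nrm α μ (fun s => u * f s + v * g s) ^ α
    ≥ ε₂ * (|u| ^ α * nrm α μ f ^ α + |v| ^ α * nrm α μ g ^ α)

noncomputable def Ufun (α : ℝ) {S : Type*} [MeasurableSpace S] (μ : Measure S)
    (f g : S → ℝ) (u v : ℝ) : ℝ :=
  Real.exp (-(nrm α μ (fun s => u * f s + v * g s) ^ α)) -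
    Real.exp (-(nrm α μ (fun s => u * f s) ^ α) - nrm α μ (fun s => v * g s) ^ α)

/-- signed power `a^⟨p⟩ = sign(a)|a|^p`. -/
noncomputable def spow (a p : ℝ) : ℝ := Real.sign a * |a| ^ p

noncomputable def D1 (α : ℝ) {S : Type*} [MeasurableSpace S] (μ : Measure S)
    (f g : S → ℝ) (u v : ℝ) : ℝ :=
  -α * (∫ s, spow (u * f s + v * g s) (α - 1) * f s ∂μ) *
      Real.exp (-(nrm α μ (fun s => u * f s + v * g s) ^ α)) +
    α * (∫ s, spow (u * f s) (α - 1) * f s ∂μ) *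
      Real.exp (-(nrm α μ (fun s => u * f s) ^ α) - nrm α μ (fun s => v * g s) ^ α)

noncomputable def D2 (α : ℝ) {S : Type*} [MeasurableSpace S] (μ : Measure S)
    (f g : S → ℝ) (u v : ℝ) : ℝ :=
  -(α * (α - 1)) * (∫ s, (if f s = 0 ∨ g s = 0 then (0:ℝ) else
        |u * f s + v * g s| ^ (α - 2) * (f s * g s)) ∂μ) *
      Real.exp (-(nrm α μ (fun s => u * f s + v * g s) ^ α)) +
    α ^ 2 * (∫ s, spow (u * f s + v * g s) (α - 1) * f s ∂μ) *
      (∫ s, spow (u * f s + v * g s) (α - 1) * g s ∂μ) *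
      Real.exp (-(nrm α μ (fun s => u * f s + v * g s) ^ α)) -
    α ^ 2 * (∫ s, spow (u * f s) (α - 1) * f s ∂μ) *
      (∫ s, spow (v * g s) (α - 1) * g s ∂μ) *
      Real.exp (-(nrm α μ (fun s => u * f s) ^ α) - nrm α μ (fun s => v * g s) ^ α)

/-- `(ξ, η)` is jointly SαS with spectral pair `(f, g)`. -/
def JointSAS (α : ℝ) {S : Type*} [MeasurableSpace S] (μ : Measure S) (f g : S → ℝ)
    {Ω : Type*} [MeasurableSpace Ω] (P : Measure Ω) (ξ η : Ω → ℝ) : Prop :=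
  ∀ u v : ℝ, (∫ ω, Complex.exp (Complex.I * ((u * ξ ω + v * η ω : ℝ) : ℂ)) ∂P)
    = Complex.exp (-((nrm α μ (fun s => u * f s + v * g s) ^ α : ℝ) : ℂ))



open scoped FourierTransform SchwartzMap in
lemma pars_schwartz {Ω : Type*} [MeasurableSpace Ω] (P : Measure Ω) [IsProbabilityMeasure P]
    (X : Ω → ℝ) (hX : Measurable X) (W : Ω → ℂ) (hW : Integrable W P) (ψ : 𝓢(ℝ, ℂ)) :
    ∫ ω, W ω * ψ (X ω) ∂P =
      ∫ v, (∫ ω, W ω * Complex.exp (Complex.I * ((2 * π * v * X ω : ℝ) : ℂ)) ∂P) * 𝓕 (ψ : ℝ → ℂ) v := by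
  have hinv : ∀ x, ψ x = ∫ v, Complex.exp (Complex.I * ((2 * π * v * x : ℝ) : ℂ)) * 𝓕 (ψ : ℝ → ℂ) v := by
    intro x
    have h1 : 𝓕⁻ (𝓕 (ψ : ℝ → ℂ)) = ψ := by
      apply ψ.continuous.fourierInv_fourier_eq ψ.integrable
      rw [← SchwartzMap.fourier_coe]
      exact (𝓕 ψ).integrable
    conv_lhs => rw [← h1]
    rw [Real.fourierInv_eq']
    congr 1; ext v
    simp only [smul_eq_mul]
    congr 2
    simp
    ring
  have hF : Integrable (𝓕 (ψ : ℝ → ℂ)) := by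
    rw [← SchwartzMap.fourier_coe]
    exact (𝓕 ψ).integrable
  have hinteg : Integrable (fun p : Ω × ℝ => W p.1 * Complex.exp (Complex.I * ((2 * π * p.2 * X p.1 : ℝ) : ℂ)) * 𝓕 (ψ : ℝ → ℂ) p.2) (P.prod volume) := by
    have h0 : Integrable (fun p : Ω × ℝ => W p.1 * 𝓕 (ψ : ℝ → ℂ) p.2) (P.prod volume) := hW.mul_prod hF
    have h1 := h0.bdd_mul (c := 1) (f := fun p : Ω × ℝ => Complex.exp (Complex.I * ((2 * π * p.2 * X p.1 : ℝ) : ℂ))) (by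
      apply Measurable.aestronglyMeasurable
      fun_prop) (by
      filter_upwards with p
      rw [mul_comm, Complex.norm_exp_ofReal_mul_I])
    refine h1.congr ?_
    filter_upwards with p
    ring
  calc ∫ ω, W ω * ψ (X ω) ∂P
      = ∫ ω, (∫ v, W ω * Complex.exp (Complex.I * ((2 * π * v * X ω : ℝ) : ℂ)) * 𝓕 (ψ : ℝ → ℂ) v) ∂P := by
        congr 1; ext ω
        rw [hinv, ← integral_const_mul]
        congr 1; ext v; ring
    _ = _ := by
        rw [integral_integral_swap hinteg]
        congr 1; ext v
        rw [integral_mul_const]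

open scoped FourierTransform SchwartzMap in
lemma pars {Ω : Type*} [MeasurableSpace Ω] (P : Measure Ω) [IsProbabilityMeasure P]
    (X : Ω → ℝ) (hX : Measurable X) (W : Ω → ℂ) (hW : Integrable W P) 
    (hw : Integrable (fun v : ℝ => ∫ ω, W ω * Complex.exp (Complex.I * ((2 * π * v * X ω : ℝ) : ℂ)) ∂P))
    (L : ℝ → ℂ) (hLm : Measurable L) (B : ℝ) (hB : ∀ x, ‖L x‖ ≤ B) (hL : Integrable L) :
    ∫ ω, W ω * L (X ω) ∂P =
      ∫ v, (∫ ω, W ω * Complex.exp (Complex.I * ((2 * π * v * X ω : ℝ) : ℂ)) ∂P) * 𝓕 L v := by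
  set w := (fun v : ℝ => ∫ ω, W ω * Complex.exp (Complex.I * ((2 * π * v * X ω : ℝ) : ℂ)) ∂P) with hwdef
  set ρ := (P.withDensity (fun ω => ‖W ω‖ₑ)).map X with hρ
  have : IsFiniteMeasure (P.withDensity (fun ω => ‖W ω‖ₑ)) :=
    isFiniteMeasure_withDensity hW.2.ne
  have : IsFiniteMeasure ρ := by rw [hρ]; infer_instance
  have : IsFiniteMeasureOnCompacts (volume + ρ) := ⟨fun K hK => by
    rw [Measure.add_apply]
    exact ENNReal.add_lt_top.2 ⟨hK.measure_lt_top, hK.measure_lt_top⟩⟩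
  have hLρ : Integrable L ρ := by
    refine Integrable.of_bound hLm.aestronglyMeasurable B ?_
    filter_upwards with x using hB x
  have hLν : MemLp L 1 (volume + ρ) := by
    rw [memLp_one_iff_integrable]
    exact hL.add_measure hLρ
  rw [← sub_eq_zero, ← norm_eq_zero]
  refine le_antisymm ?_ (norm_nonneg _)
  have key : ∀ ε > 0, ‖∫ ω, W ω * L (X ω) ∂P - ∫ v, w v * 𝓕 L v‖ ≤ ε * (1 + ∫ v, ‖w v‖) := by
    intro ε hε
    obtain ⟨g, hg1, hg2, hg3⟩ := hLν.exist_eLpNorm_sub_le (by simp) le_rfl hε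
    let ψ : 𝓢(ℝ, ℂ) := hg1.toSchwartzMap hg2
    have hψ : (ψ : ℝ → ℂ) = g := rfl
    have hps := pars_schwartz P X hX W hW ψ
    rw [hψ] at hps
    have hgi : Integrable g := hψ ▸ ψ.integrable
    have hgm : Measurable g := hg2.continuous.measurable
    rw [eLpNorm_one_eq_lintegral_enorm, lintegral_add_measure] at hg3
    have hb1 : ∫⁻ x, ‖(L - g) x‖ₑ ≤ ENNReal.ofReal ε := le_trans le_self_add hg3
    have hb2 : ∫⁻ x, ‖(L - g) x‖ₑ ∂ρ ≤ ENNReal.ofReal ε := le_trans le_add_self hg3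
    have hb2' : ∫⁻ ω, ‖W ω * (L (X ω) - g (X ω))‖ₑ ∂P ≤ ENNReal.ofReal ε := by
      rw [hρ, lintegral_map (by fun_prop) hX,
        lintegral_withDensity_eq_lintegral_mul₀ hW.1.enorm (by fun_prop)] at hb2
      refine le_trans (le_of_eq ?_) hb2
      congr 1; ext ω; simp
    have hI1 : Integrable (fun ω => W ω * (L (X ω) - g (X ω))) P := by
      refine ⟨?_, lt_of_le_of_lt hb2' ENNReal.ofReal_lt_top⟩
      exact hW.1.mul (by fun_prop : Measurable _).aestronglyMeasurable
    have hI2 : Integrable (fun ω => W ω * L (X ω)) P := by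
      have := hW.bdd_mul (c := B) (f := fun ω => L (X ω)) (by fun_prop : Measurable _).aestronglyMeasurable (by
        filter_upwards with ω using hB _)
      exact this.congr (by filter_upwards with ω; ring)
    have hn1 : ‖∫ ω, W ω * L (X ω) ∂P - ∫ ω, W ω * g (X ω) ∂P‖ ≤ ε := by
      have hI3 : Integrable (fun ω => W ω * g (X ω)) P := by
        refine (hI2.sub hI1).congr ?_
        filter_upwards with ω
        simp only [Pi.sub_apply]; ring
      rw [← integral_sub hI2 hI3]
      have : ∀ ω, W ω * L (X ω) - W ω * g (X ω) = W ω * (L (X ω) - g (X ω)) := fun ω => by ring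
      simp_rw [this]
      have h := enorm_integral_le_lintegral_enorm (μ := P) (fun ω => W ω * (L (X ω) - g (X ω)))
      have h2 := h.trans hb2'
      rw [← ofReal_norm] at h2
      exact (ENNReal.ofReal_le_ofReal_iff hε.le).1 h2
    have hn2 : ∀ v, ‖𝓕 L v - 𝓕 g v‖ ≤ ε := by
      intro v
      rw [Real.fourier_eq, Real.fourier_eq, ← integral_sub]
      · have h := enorm_integral_le_lintegral_enorm (μ := volume) (fun a => (𝐞 (-inner ℝ a v) • L a - 𝐞 (-inner ℝ a v) • g a : ℂ))
        have h2 : ‖∫ a, (𝐞 (-inner ℝ a v) • L a - 𝐞 (-inner ℝ a v) • g a : ℂ)‖ₑ ≤ ENNReal.ofReal ε := by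
          refine (h.trans (le_of_eq ?_)).trans hb1
          congr 1; ext a
          rw [← smul_sub, ← ofReal_norm, Circle.norm_smul, ofReal_norm]
          rfl
        rw [← ofReal_norm] at h2
        exact (ENNReal.ofReal_le_ofReal_iff hε.le).1 h2
      · exact (Real.fourierIntegral_convergent_iff v).2 hL
      · exact (Real.fourierIntegral_convergent_iff v).2 hgi
    have hbd : ∀ {h : ℝ → ℂ}, Integrable h → Integrable (fun v => w v * 𝓕 h v) := by
      intro h hh
      have := hw.bdd_mul (c := ∫ x, ‖h x‖) (f := fun v => 𝓕 h v) 
        (by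
          have : Continuous (𝓕 h) := VectorFourier.fourierIntegral_continuous Real.continuous_fourierChar (by exact continuous_inner) hh
          exact this.aestronglyMeasurable) (by
        filter_upwards with v
        exact VectorFourier.norm_fourierIntegral_le_integral_norm _ _ _ _ _)
      exact this.congr (by filter_upwards with v; ring)
    have hn3 : ‖(∫ v, w v * 𝓕 g v) - ∫ v, w v * 𝓕 L v‖ ≤ ε * ∫ v, ‖w v‖ := by
      rw [← integral_sub (hbd hgi) (hbd hL), ← integral_const_mul]
      refine norm_integral_le_of_norm_le (hw.norm.const_mul ε) ?_
      filter_upwards with v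
      rw [← mul_sub, norm_mul, mul_comm, norm_sub_rev]
      gcongr
      exact hn2 v
    calc _ = ‖(∫ ω, W ω * L (X ω) ∂P - ∫ ω, W ω * g (X ω) ∂P) + ((∫ v, w v * 𝓕 g v) - ∫ v, w v * 𝓕 L v)‖ := by
            rw [hps]; congr 1; simp only [hwdef]; ring
      _ ≤ _ := (norm_add_le _ _).trans (by linarith)
  have hpos : 0 ≤ ∫ v, ‖w v‖ := integral_nonneg fun _ => norm_nonneg _
  refine le_of_forall_pos_le_add fun ε hε => ?_
  have := key (ε / (1 + ∫ v, ‖w v‖)) (by positivity)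
  rw [div_mul_cancel₀ _ (by positivity)] at this
  linarith


lemma shift_bound (b h : ℝ) (hh : 0 < h) (M : ℝ → ℝ) (hM0 : ∀ x ≤ b, M x = 0)
    (hMn : ∀ x, 0 ≤ M x) (hanti : AntitoneOn M (Ioi b)) (hMi : Integrable M) :
    ∫ x, |M x - M (x + h)| = 2 * ∫ x in Ioc b (b + h), M x := by
  have hp : ∀ x, |M x - M (x + h)| = (M x - M (x + h)) + 2 * (Iic (b + h)).indicator M (x + h) := by
    intro x
    by_cases hx : x ≤ b
    · rw [hM0 x hx, indicator_of_mem (by simpa using hx), zero_sub, abs_neg, abs_of_nonneg (hMn _)]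
      ring
    · push Not at hx
      rw [indicator_of_notMem (by simpa using hx), abs_of_nonneg]
      · ring
      · have := hanti (mem_Ioi.2 hx) (mem_Ioi.2 (by linarith : b < x + h)) (by linarith)
        linarith
  simp_rw [hp]
  have hind : Integrable ((Iic (b + h)).indicator M) := hMi.indicator measurableSet_Iic
  have hsub : Integrable (fun x => M x - M (x + h)) := hMi.sub (hMi.comp_add_right h)
  rw [integral_add hsub ((hind.comp_add_right h).const_mul 2),
    integral_sub hMi (hMi.comp_add_right h), integral_add_right_eq_self M h, sub_self, zero_add,
    integral_const_mul, integral_add_right_eq_self ((Iic (b + h)).indicator M) h,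
    ← integral_indicator measurableSet_Ioc]
  congr 2; ext x
  by_cases hx : x ≤ b
  · simp [indicator, hM0 x hx]
  · simp only [indicator, mem_Iic, mem_Ioc]
    push Not at hx
    simp [hx]

open scoped FourierTransform in
lemma four_M (b v : ℝ) (hv : v ≠ 0) (M : ℝ → ℝ) (hM0 : ∀ x ≤ b, M x = 0)
    (hMn : ∀ x, 0 ≤ M x) (hanti : AntitoneOn M (Ioi b)) (hMi : Integrable M) :
    ‖𝓕 (fun x => (M x : ℂ)) v‖ ≤ ∫ x in Ioc b (b + 1 / (2 * |v|)), M x := by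
  have hvp : 0 < |v| := abs_pos.2 hv
  set h := 1 / (2 * |v|) with hh
  have hhp : 0 < h := by positivity
  have hMc : Integrable (fun x => (M x : ℂ)) := hMi.ofReal
  rw [Real.fourier_eq, fourierIntegral_eq_half_sub_half_period_translate hv hMc, norm_smul]
  have h1 : ‖∫ x : ℝ, 𝐞 (-inner ℝ x v) • ((M x : ℂ) - (M (x + (1 / (2 * ‖v‖ ^ 2)) • v) : ℂ))‖
      ≤ ∫ x, |M x - M (x + (1 / (2 * ‖v‖ ^ 2)) • v)| := by
    refine (norm_integral_le_integral_norm _).trans (le_of_eq ?_)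
    congr 1; ext x
    rw [Circle.norm_smul, ← Complex.ofReal_sub, Complex.norm_real, Real.norm_eq_abs]
  have h2 : ∫ x, |M x - M (x + (1 / (2 * ‖v‖ ^ 2)) • v)| = ∫ x, |M x - M (x + h)| := by
    rcases lt_or_gt_of_ne hv with hneg | hpos
    · have e : (1 / (2 * ‖v‖ ^ 2)) • v = -h := by
        rw [hh, Real.norm_eq_abs, abs_of_neg hneg, smul_eq_mul]; field_simp
      rw [e, ← integral_add_right_eq_self (fun x => |M x - M (x + -h)|) h]
      congr 1; ext x
      rw [abs_sub_comm]; congr 3; ring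
    · have e : (1 / (2 * ‖v‖ ^ 2)) • v = h := by
        rw [hh, Real.norm_eq_abs, abs_of_pos hpos, smul_eq_mul]; field_simp
      rw [e]
  rw [h2, shift_bound b h hhp M hM0 hMn hanti hMi] at h1
  have : ‖(1 / (2:ℂ))‖ = 1 / 2 := by simp
  rw [this]
  calc _ ≤ 1 / 2 * (2 * ∫ x in Ioc b (b + h), M x) := by gcongr
    _ = _ := by ring

open scoped FourierTransform in
lemma four_M_bounds (b v c β : ℝ) (hb : 1 ≤ b) (hc : 0 ≤ c) (hβ0 : 0 < β) (hβ1 : β < 1) (hv : v ≠ 0) (M : ℝ → ℝ) (hM0 : ∀ x ≤ b, M x = 0)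
    (hMn : ∀ x, 0 ≤ M x) (hanti : AntitoneOn M (Ioi b)) (hMi : Integrable M)
    (hMc : ∀ x, b < x → M x ≤ c * x ^ (β - 1)) :
    ‖𝓕 (fun x => (M x : ℂ)) v‖ ≤ c * (b ^ (β - 1) / |v|) ∧
    ‖𝓕 (fun x => (M x : ℂ)) v‖ ≤ c * (|v| ^ (-β) / β) := by
  have h0 := four_M b v hv M hM0 hMn hanti hMi
  have hvp : 0 < |v| := abs_pos.2 hv
  set h := 1 / (2 * |v|) with hh
  have hhp : 0 < h := by positivity
  have hhv : h ≤ 1 / |v| := by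
    rw [hh]; apply one_div_le_one_div_of_le hvp; linarith
  have hii : IntegrableOn (fun x : ℝ => x ^ (β - 1)) (Ioc b (b + h)) := by
    have := (intervalIntegral.intervalIntegrable_rpow' (a := b) (b := b + h) (by linarith : -1 < β - 1))
    rwa [intervalIntegrable_iff_integrableOn_Ioc_of_le (by linarith)] at this
  have h1 : ∫ x in Ioc b (b + h), M x ≤ ∫ x in Ioc b (b + h), c * x ^ (β - 1) :=
    setIntegral_mono_on hMi.integrableOn (hii.const_mul c) measurableSet_Ioc (fun x hx => hMc x hx.1)
  rw [integral_const_mul] at h1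
  have hval : ∫ x in Ioc b (b + h), x ^ (β - 1) = ((b + h) ^ β - b ^ β) / β := by
    rw [← intervalIntegral.integral_of_le (by linarith), integral_rpow (Or.inl (by linarith))]
    simp
  constructor
  · refine h0.trans (h1.trans ?_)
    gcongr
    calc ∫ x in Ioc b (b + h), x ^ (β - 1) ≤ ∫ x in Ioc b (b + h), b ^ (β - 1) := by
          refine setIntegral_mono_on hii (by simp) measurableSet_Ioc (fun x hx => ?_)
          exact Real.rpow_le_rpow_of_nonpos (by linarith) hx.1.le (by linarith)
      _ = b ^ (β - 1) * h := by
          simp [Measure.real, hhp.le]; ring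
      _ ≤ b ^ (β - 1) * (1 / |v|) := by gcongr
      _ = _ := by ring
  · refine h0.trans (h1.trans ?_)
    rw [hval]
    gcongr
    have : (b + h) ^ β ≤ b ^ β + h ^ β := Real.rpow_add_le_add_rpow (by linarith) hhp.le hβ0.le hβ1.le
    calc (b + h) ^ β - b ^ β ≤ h ^ β := by linarith
      _ ≤ (1 / |v|) ^ β := by gcongr
      _ = |v| ^ (-β) := by rw [one_div, Real.inv_rpow hvp.le, Real.rpow_neg hvp.le]


lemma my_integrable_comp_abs {f : ℝ → ℝ} (h : IntegrableOn f (Ioi 0)) :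
    Integrable (fun x => f |x|) := by
  have hf : IntegrableOn (fun x => f |x|) (Ioi 0) := by
    refine (integrableOn_congr_fun (fun x hx => ?_) measurableSet_Ioi).2 h
    rw [abs_of_pos (mem_Ioi.1 hx)]
  have int_Iic : IntegrableOn (fun x ↦ f |x|) (Iic 0) := by
    rw [← Measure.map_neg_eq_self (volume : Measure ℝ)]
    let m : MeasurableEmbedding fun x : ℝ => -x := (Homeomorph.neg ℝ).measurableEmbedding
    rw [m.integrableOn_map_iff]
    simp_rw [Function.comp_def, abs_neg, neg_preimage, neg_Iic, neg_zero]
    exact Iff.mpr integrableOn_Ici_iff_integrableOn_Ioi hf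
  rw [← integrableOn_univ, ← Iic_union_Ioi (a := (0:ℝ))]
  exact int_Iic.union hf

lemma kern (β : ℝ) (hβ0 : 0 < β) (hβ1 : β < 1) :
    ∃ C > 0, ∀ b : ℝ, 1 ≤ b → ∃ k : ℝ → ℝ, Integrable k ∧
      (∀ v, v ≠ 0 → min (b ^ (β - 1) / |v|) (|v| ^ (-β) / β) * (1 + v ^ 2)⁻¹ ≤ k v) ∧
      ∫ v, k v ≤ C * b ^ (β - 1) * Real.log (b + 1) := by
  refine ⟨2 * (1 / (β * (1 - β)) + 1) / Real.log 2 + 2, ?_, ?_⟩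
  · have : 0 < 1 - β := by linarith
    have := Real.log_pos (by norm_num : (1:ℝ) < 2)
    positivity
  intro b hb
  have hb0 : 0 < b := by linarith
  have hbi : 0 < 1 / b := by positivity
  have hbi1 : 1 / b ≤ 1 := by rw [div_le_one hb0]; exact hb
  let k0 : ℝ → ℝ := fun x => if x ≤ 1 / b then x ^ (-β) / β else if x ≤ 1 then b ^ (β - 1) * x⁻¹ else b ^ (β - 1) * x ^ (-2 : ℝ)
  have hunion : Ioi (0:ℝ) = (Ioc 0 (1/b) ∪ Ioc (1/b) 1) ∪ Ioi 1 := by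
    rw [Ioc_union_Ioc_eq_Ioc hbi.le hbi1, Ioc_union_Ioi_eq_Ioi zero_le_one]
  have e1 : EqOn k0 (fun x => x ^ (-β) / β) (Ioc 0 (1/b)) := fun x hx => by
    simp only [k0, if_pos hx.2]
  have e2 : EqOn k0 (fun x => b ^ (β - 1) * x⁻¹) (Ioc (1/b) 1) := fun x hx => by
    simp only [k0, if_neg (not_le.2 hx.1), if_pos hx.2]
  have e3 : EqOn k0 (fun x => b ^ (β - 1) * x ^ (-2:ℝ)) (Ioi 1) := fun x hx => by
    rw [mem_Ioi] at hx
    simp only [k0, if_neg (not_le.2 hx), if_neg (not_le.2 (lt_of_le_of_lt hbi1 hx))]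
  have i1 : IntegrableOn k0 (Ioc 0 (1/b)) := by
    rw [integrableOn_congr_fun e1 measurableSet_Ioc]
    have := (intervalIntegral.intervalIntegrable_rpow' (a := 0) (b := 1/b) (by linarith : -1 < -β))
    rw [intervalIntegrable_iff_integrableOn_Ioc_of_le hbi.le] at this
    exact this.div_const β
  have i2 : IntegrableOn k0 (Ioc (1/b) 1) := by
    rw [integrableOn_congr_fun e2 measurableSet_Ioc]
    have : IntervalIntegrable (fun x : ℝ => x⁻¹) volume (1/b) 1 := by
      apply intervalIntegral.intervalIntegrable_inv (fun x hx => ?_) continuousOn_id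
      rw [uIcc_of_le hbi1] at hx
      exact (lt_of_lt_of_le hbi hx.1).ne'
    rw [intervalIntegrable_iff_integrableOn_Ioc_of_le hbi1] at this
    exact this.const_mul _
  have i3 : IntegrableOn k0 (Ioi 1) := by
    rw [integrableOn_congr_fun e3 measurableSet_Ioi]
    exact (integrableOn_Ioi_rpow_of_lt (by norm_num) one_pos).const_mul _
  have i0 : IntegrableOn k0 (Ioi 0) := by
    rw [hunion]; exact (i1.union i2).union i3
  have v1 : ∫ x in Ioc 0 (1/b), k0 x = b ^ (β - 1) / (β * (1 - β)) := by
    rw [setIntegral_congr_fun measurableSet_Ioc e1, ← intervalIntegral.integral_of_le hbi.le,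
      intervalIntegral.integral_div, integral_rpow (Or.inl (by linarith)),
      Real.zero_rpow (by linarith), one_div, Real.inv_rpow hb0.le, ← Real.rpow_neg hb0.le]
    have : (1:ℝ) - β ≠ 0 := by linarith
    have h3 : -β + 1 = 1 - β := by ring
    have h4 : -(1 - β) = β - 1 := by ring
    rw [h3, h4, sub_zero, div_div, mul_comm (1 - β)]
  have v2 : ∫ x in Ioc (1/b) 1, k0 x = b ^ (β - 1) * Real.log b := by
    rw [setIntegral_congr_fun measurableSet_Ioc e2, ← intervalIntegral.integral_of_le hbi1,
      intervalIntegral.integral_const_mul, integral_inv_of_pos hbi one_pos]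
    simp
  have v3 : ∫ x in Ioi 1, k0 x = b ^ (β - 1) := by
    rw [setIntegral_congr_fun measurableSet_Ioi e3, integral_const_mul,
      integral_Ioi_rpow_of_lt (by norm_num) one_pos]
    norm_num
  refine ⟨fun v => k0 |v|, ?_, ?_, ?_⟩
  · exact my_integrable_comp_abs i0
  · intro v hv
    have hvp : 0 < |v| := abs_pos.2 hv
    have h2 : (1 + v ^ 2)⁻¹ ≤ 1 := inv_le_one_of_one_le₀ (by nlinarith)
    have h2' : 0 ≤ (1 + v ^ 2)⁻¹ := by positivity
    have h3 : (1 + v ^ 2)⁻¹ ≤ |v| ^ (-2:ℝ) := by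
      rw [Real.rpow_neg hvp.le]
      apply inv_anti₀ (by positivity)
      rw [Real.rpow_two, sq_abs]; linarith
    have hbp : 0 < b ^ (β - 1) := by positivity
    simp only [k0]
    split_ifs with ha hb1
    · calc _ ≤ (|v| ^ (-β) / β) * 1 := by
            apply mul_le_mul (min_le_right _ _) h2 h2' (by positivity)
        _ = _ := by ring
    · calc _ ≤ (b ^ (β - 1) / |v|) * 1 := by
            apply mul_le_mul (min_le_left _ _) h2 h2' (by positivity)
        _ = _ := by ring
    · push Not at hb1
      apply mul_le_mul _ h3 h2' hbp.le
      refine (min_le_left _ _).trans ?_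
      rw [div_le_iff₀ hvp]
      nlinarith
  · rw [integral_comp_abs (f := k0), hunion,
      setIntegral_union _ measurableSet_Ioi (i1.union i2) i3,
      setIntegral_union _ measurableSet_Ioc i1 i2, v1, v2, v3]
    · have hl2 := Real.log_pos (by norm_num : (1:ℝ) < 2)
      have hl : Real.log 2 ≤ Real.log (b + 1) := Real.log_le_log (by norm_num) (by linarith)
      have hl' : Real.log b ≤ Real.log (b + 1) := Real.log_le_log hb0 (by linarith)
      have hbp : 0 < b ^ (β - 1) := by positivity
      have hβ2 : 0 < 1 - β := by linarith
      have hq : 1 ≤ Real.log (b + 1) / Real.log 2 := by rwa [one_le_div hl2]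
      set q := 1 / (β * (1 - β)) with hq'
      have hqp : 0 < q := by positivity
      have h1 : q + 1 ≤ (q + 1) * (Real.log (b + 1) / Real.log 2) := le_mul_of_one_le_right (by positivity) hq
      calc 2 * (b ^ (β - 1) / (β * (1 - β)) + b ^ (β - 1) * Real.log b + b ^ (β - 1))
          = b ^ (β - 1) * (2 * (q + 1) + 2 * Real.log b) := by rw [hq']; ring
        _ ≤ b ^ (β - 1) * (2 * ((q + 1) * (Real.log (b + 1) / Real.log 2)) + 2 * Real.log (b + 1)) := by
            gcongr
        _ = _ := by ring
    · rw [Set.disjoint_left]; intro x hx hx'; exact absurd hx.2 (not_le.2 hx'.1)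
    · rw [Ioc_union_Ioc_eq_Ioc hbi.le hbi1, Set.disjoint_left]; intro x hx hx'; exact absurd hx.2 (not_le.2 hx')


lemma moment {Ω : Type*} [MeasurableSpace Ω] (P : Measure Ω) [IsProbabilityMeasure P]
    (X : Ω → ℝ) (hX : Measurable X) (c α : ℝ) (hc : 0 ≤ c) (hα1 : 1 < α)
    (h : ∀ u : ℝ, ∫ ω, Complex.exp (Complex.I * ((u * X ω : ℝ) : ℂ)) ∂P
      = Complex.exp (-((c * |u| ^ α : ℝ) : ℂ))) : Integrable X P := by
  have : IsProbabilityMeasure (P.map X) := Measure.isProbabilityMeasure_map hX.aemeasurable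
  have hcf : ∀ t, charFun (P.map X) t = Complex.exp (-((c * |t| ^ α : ℝ) : ℂ)) := by
    intro t
    rw [charFun_apply_real, integral_map hX.aemeasurable (by fun_prop), ← h]
    congr 1; ext ω; congr 1; push_cast; ring
  have htail : ∀ r : ℝ, 0 < r → (P.map X).real {x | r < |x|} ≤ (2 * c * 2 ^ α) * r ^ (-α) := by
    intro r hr
    refine (measureReal_abs_gt_le_integral_charFun hr).trans ?_
    have hb : ‖∫ t in (-2 * r⁻¹)..(2 * r⁻¹), 1 - charFun (P.map X) t‖
        ≤ (c * (2 * r⁻¹) ^ α) * |2 * r⁻¹ - (-2 * r⁻¹)| := by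
      apply intervalIntegral.norm_integral_le_of_norm_le_const
      intro t ht
      have hr' : -2 * r⁻¹ ≤ 2 * r⁻¹ := by
        have : 0 < r⁻¹ := by positivity
        linarith
      rw [uIoc_of_le hr'] at ht
      have htabs : |t| ≤ 2 * r⁻¹ := abs_le.2 ⟨by linarith [ht.1], ht.2⟩
      rw [hcf, ← Complex.ofReal_neg, ← Complex.ofReal_exp, ← Complex.ofReal_one, ← Complex.ofReal_sub,
        Complex.norm_real, Real.norm_eq_abs]
      have h0 : 0 ≤ c * |t| ^ α := by positivity
      have h1 : Real.exp (-(c * |t| ^ α)) ≤ 1 := Real.exp_le_one_iff.2 (by linarith)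
      rw [abs_of_nonneg (by linarith)]
      have h2 := Real.add_one_le_exp (-(c * |t| ^ α))
      calc _ ≤ c * |t| ^ α := by linarith
        _ ≤ _ := by gcongr
    have e : |2 * r⁻¹ - (-2 * r⁻¹)| = 4 * r⁻¹ := by
      rw [abs_of_nonneg]
      · ring
      · have : 0 < r⁻¹ := by positivity
        linarith
    rw [e] at hb
    calc _ ≤ 2⁻¹ * r * ((c * (2 * r⁻¹) ^ α) * (4 * r⁻¹)) := by gcongr
      _ = _ := by
        rw [Real.mul_rpow (by norm_num) (by positivity), Real.inv_rpow hr.le, Real.rpow_neg hr.le]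
        field_simp
        ring
  refine ⟨hX.aestronglyMeasurable, ?_⟩
  rw [hasFiniteIntegral_iff_norm]
  rw [lintegral_eq_lintegral_meas_lt P (by filter_upwards with ω using norm_nonneg _) hX.norm.aemeasurable]
  have hle : ∀ t ∈ Ioi (0:ℝ), P {a | t < ‖X a‖} ≤ ENNReal.ofReal (if t ≤ 1 then 1 else (2 * c * 2 ^ α) * t ^ (-α)) := by
    intro t ht
    split_ifs with h1
    · simpa using prob_le_one
    · have := htail t ht
      rw [Measure.real, Measure.map_apply hX (measurableSet_lt measurable_const (by fun_prop))] at this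
      rw [← ENNReal.ofReal_toReal (measure_ne_top P {a | t < ‖X a‖})]
      exact ENNReal.ofReal_le_ofReal this
  refine lt_of_le_of_lt (setLIntegral_mono' measurableSet_Ioi hle) ?_
  have hi : IntegrableOn (fun t : ℝ => if t ≤ 1 then (1:ℝ) else (2 * c * 2 ^ α) * t ^ (-α)) (Ioi 0) := by
    rw [← Ioc_union_Ioi_eq_Ioi zero_le_one]
    apply IntegrableOn.union
    · rw [integrableOn_congr_fun (g := fun _ => (1:ℝ)) (fun x hx => by simp [hx.2]) measurableSet_Ioc]
      simp
    · rw [integrableOn_congr_fun (g := fun t : ℝ => (2 * c * 2 ^ α) * t ^ (-α)) (fun x hx => by simp [not_le.2 (mem_Ioi.1 hx)]) measurableSet_Ioi]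
      exact (integrableOn_Ioi_rpow_of_lt (by linarith) one_pos).const_mul _
  refine lt_of_le_of_lt (lintegral_mono fun x => ?_) hi.2
  exact Real.ofReal_le_enorm _

lemma spow_diff (α : ℝ) (hα1 : 1 < α) (hα2 : α < 2) (x y : ℝ) :
    |(|x| ^ (α - 2) * x) - |y| ^ (α - 2) * y| ≤ 2 * |x - y| ^ (α - 1) := by
  have hpos : ∀ z : ℝ, 0 ≤ z → |z| ^ (α - 2) * z = z ^ (α - 1) := by
    intro z hz
    rw [abs_of_nonneg hz]
    rcases hz.eq_or_lt with h | h
    · rw [← h, Real.zero_rpow (by linarith : α - 1 ≠ 0), mul_zero]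
    · rw [show α - 1 = (α - 2) + 1 by ring, Real.rpow_add_one h.ne']
  have hneg : ∀ z : ℝ, z ≤ 0 → |z| ^ (α - 2) * z = -(-z) ^ (α - 1) := by
    intro z hz
    have := hpos (-z) (by linarith)
    rw [abs_neg] at this
    linarith
  have hsub : ∀ a b : ℝ, 0 ≤ a → 0 ≤ b → |a ^ (α - 1) - b ^ (α - 1)| ≤ |a - b| ^ (α - 1) := by
    have key : ∀ a b : ℝ, 0 ≤ b → b ≤ a → |a ^ (α - 1) - b ^ (α - 1)| ≤ |a - b| ^ (α - 1) := by
      intro a b hb hab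
      have h1 : b ^ (α - 1) ≤ a ^ (α - 1) := Real.rpow_le_rpow hb hab (by linarith)
      rw [abs_of_nonneg (by linarith), abs_of_nonneg (by linarith)]
      have := Real.rpow_add_le_add_rpow (a := a - b) (b := b) (by linarith) hb (p := α - 1) (by linarith) (by linarith)
      rw [sub_add_cancel] at this
      linarith
    intro a b ha hb
    rcases le_total b a with h | h
    · exact key a b hb h
    · rw [abs_sub_comm, abs_sub_comm a b]; exact key b a ha h
  have hopp : ∀ a b : ℝ, 0 ≤ a → 0 ≤ b → |a ^ (α - 1) + b ^ (α - 1)| ≤ 2 * |a + b| ^ (α - 1) := by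
    intro a b ha hb
    rw [abs_of_nonneg (by positivity), abs_of_nonneg (by positivity)]
    have h1 : a ^ (α - 1) ≤ (a + b) ^ (α - 1) := Real.rpow_le_rpow ha (by linarith) (by linarith)
    have h2 : b ^ (α - 1) ≤ (a + b) ^ (α - 1) := Real.rpow_le_rpow hb (by linarith) (by linarith)
    linarith
  have hnn : 0 ≤ |x - y| ^ (α - 1) := by positivity
  rcases le_total 0 x with hx | hx <;> rcases le_total 0 y with hy | hy
  · rw [hpos x hx, hpos y hy]; linarith [hsub x y hx hy]
  · rw [hpos x hx, hneg y hy]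
    have := hopp x (-y) hx (by linarith)
    rw [sub_neg_eq_add]; rwa [← sub_eq_add_neg] at this
  · rw [hneg x hx, hpos y hy]
    have := hopp (-x) y (by linarith) hy
    rw [← abs_neg, ← abs_neg (x - y)]
    convert this using 2
    · ring
    · congr 2; ring
  · rw [hneg x hx, hneg y hy]
    have := hsub (-x) (-y) (by linarith) (by linarith)
    rw [← abs_neg (x - y)] at hnn ⊢
    rw [← abs_neg]
    have e1 : -(-(-x) ^ (α - 1) - -(-y) ^ (α - 1)) = (-x) ^ (α - 1) - (-y) ^ (α - 1) := by ring
    have e2 : -(x - y) = -x - -y := by ring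
    rw [e2] at hnn
    rw [e1, e2]
    linarith

lemma pow_sum_diff (α : ℝ) (hα1 : 1 < α) (hα2 : α < 2) (a b : ℝ) :
    |(|a + b| ^ α - |a| ^ α - |b| ^ α)| ≤ 5 * |a * b| ^ (α / 2) := by
  wlog hab : |b| ≤ |a| generalizing a b
  · have := this b a (le_of_not_ge hab)
    rw [add_comm b a, mul_comm b a] at this
    convert this using 2; ring
  rcases eq_or_ne b 0 with rfl | hb
  · simp [Real.zero_rpow (by linarith : α ≠ 0), Real.zero_rpow (by linarith : α / 2 ≠ 0)]
  have hb0 : 0 < |b| := abs_pos.2 hb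
  have ha0 : 0 < |a| := lt_of_lt_of_le hb0 hab
  have hm1 : |b| ^ α ≤ |a * b| ^ (α / 2) := by
    rw [abs_mul, Real.mul_rpow ha0.le hb0.le]
    calc |b| ^ α = |b| ^ (α / 2) * |b| ^ (α / 2) := by rw [← Real.rpow_add hb0]; ring_nf
      _ ≤ _ := by gcongr
  have hm2 : |a| ^ (α - 1) * |b| ≤ |a * b| ^ (α / 2) := by
    rw [abs_mul, Real.mul_rpow ha0.le hb0.le]
    calc |a| ^ (α - 1) * |b| = |a| ^ (α - 1) * (|b| ^ (1 - α / 2) * |b| ^ (α / 2)) := by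
          rw [← Real.rpow_add hb0]; ring_nf; rw [Real.rpow_one]
      _ ≤ |a| ^ (α - 1) * (|a| ^ (1 - α / 2) * |b| ^ (α / 2)) := by
          gcongr; linarith
      _ = _ := by
          rw [← mul_assoc, ← Real.rpow_add ha0]; ring_nf
  have hmv : |(|a + b| ^ α - |a| ^ α)| ≤ (α * (2 * |a|) ^ (α - 1)) * |b| := by
    have := Convex.norm_image_sub_le_of_norm_hasDerivWithin_le (f := fun x : ℝ => |x| ^ α) 
      (f' := fun x => α * |x| ^ (α - 2) * x) (s := Icc (-(2 * |a|)) (2 * |a|)) (x := a) (y := a + b) (C := α * (2 * |a|) ^ (α - 1))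
      (fun x hx => (hasDerivAt_abs_rpow x hα1).hasDerivWithinAt) (fun x hx => by
        rw [norm_mul, norm_mul, Real.norm_of_nonneg (by linarith : 0 ≤ α), Real.norm_of_nonneg (by positivity : 0 ≤ |x| ^ (α - 2)), Real.norm_eq_abs, mul_assoc]
        have : |x| ^ (α - 2) * |x| = |x| ^ (α - 1) := by
          rcases eq_or_ne x 0 with rfl | hx0
          · simp [Real.zero_rpow (by linarith : α - 1 ≠ 0)]
          · rw [show α - 1 = (α - 2) + 1 by ring, Real.rpow_add_one (abs_pos.2 hx0).ne']
        rw [this]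
        have : |x| ≤ 2 * |a| := abs_le.2 hx
        gcongr
        ) (convex_Icc _ _) (abs_le.1 (by linarith)) (abs_le.1 (by linarith [abs_add_le a b]))
    simpa using this
  have h2 : (2:ℝ) ^ (α - 1) ≤ 2 := by
    calc (2:ℝ) ^ (α - 1) ≤ 2 ^ (1:ℝ) := Real.rpow_le_rpow_of_exponent_le (by norm_num) (by linarith)
      _ = 2 := by simp
  rw [Real.mul_rpow (by norm_num) ha0.le] at hmv
  have hX : 0 ≤ |a| ^ (α - 1) * |b| := by positivity
  have hY : α * (2:ℝ) ^ (α - 1) ≤ 4 := by nlinarith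
  have h3 : α * ((2:ℝ) ^ (α - 1) * |a| ^ (α - 1)) * |b| ≤ 4 * |a * b| ^ (α / 2) := by
    calc _ = (α * (2:ℝ) ^ (α - 1)) * (|a| ^ (α - 1) * |b|) := by ring
      _ ≤ 4 * (|a| ^ (α - 1) * |b|) := by gcongr
      _ ≤ _ := by gcongr
  have hbn : 0 ≤ |b| ^ α := by positivity
  calc _ ≤ |(|a + b| ^ α - |a| ^ α)| + |(|b| ^ α)| := abs_sub _ _
    _ ≤ _ := by rw [abs_of_nonneg hbn]; linarith

noncomputable def NN (α : ℝ) {S : Type*} [MeasurableSpace S] (μ : Measure S) (f g : S → ℝ) (u v : ℝ) : ℝ :=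
  ∫ s, |u * f s + v * g s| ^ α ∂μ

noncomputable def NU (α : ℝ) {S : Type*} [MeasurableSpace S] (μ : Measure S) (f g : S → ℝ) (u v : ℝ) : ℝ :=
  ∫ s, α * |u * f s + v * g s| ^ (α - 2) * (u * f s + v * g s) * f s ∂μ

lemma nrm_pow (α : ℝ) (hα : 0 < α) {S : Type*} [MeasurableSpace S] (μ : Measure S) (f : S → ℝ) :
    nrm α μ f ^ α = ∫ s, |f s| ^ α ∂μ := by
  unfold nrm
  rw [← Real.rpow_mul (integral_nonneg fun s => by positivity), one_div, inv_mul_cancel₀ hα.ne',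
    Real.rpow_one]

lemma abs_spow (α : ℝ) (hα1 : 1 < α) (x : ℝ) : |x| ^ (α - 2) * |x| = |x| ^ (α - 1) := by
  rcases eq_or_ne x 0 with rfl | hx0
  · simp [Real.zero_rpow (by linarith : α - 1 ≠ 0)]
  · rw [show α - 1 = (α - 2) + 1 by ring, Real.rpow_add_one (abs_pos.2 hx0).ne']

lemma abs_spow' (α : ℝ) (hα1 : 1 < α) (x : ℝ) (hx : 0 ≤ x) : x ^ (α - 1) * x = x ^ α := by
  rcases hx.eq_or_lt with rfl | hx0
  · simp [Real.zero_rpow (by linarith : α ≠ 0)]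
  · rw [← Real.rpow_add_one hx0.ne']; ring_nf

section
variable {α : ℝ} {S : Type*} [MeasurableSpace S] {μ : Measure S} {f g : S → ℝ}

lemma int_sum (hα1 : 1 < α) (hf : MemLalpha α μ f) (hg : MemLalpha α μ g) :
    Integrable (fun s => (|f s| + |g s|) ^ α) μ := by
  have hfm := hf.1.aemeasurable
  have hgm := hg.1.aemeasurable
  refine ((hf.2.add hg.2).const_mul (2 ^ α)).mono' 
    (by fun_prop : AEMeasurable _ μ).aestronglyMeasurable ?_
  filter_upwards with s
  rw [Real.norm_of_nonneg (by positivity)]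
  simp only [Pi.add_apply]
  have hf0 := abs_nonneg (f s)
  have hg0 := abs_nonneg (g s)
  have p1 : 0 ≤ |f s| ^ α := by positivity
  have p2 : 0 ≤ |g s| ^ α := by positivity
  rcases le_total |f s| |g s| with h | h
  · calc (|f s| + |g s|) ^ α ≤ (2 * |g s|) ^ α := by gcongr; linarith
      _ = 2 ^ α * |g s| ^ α := Real.mul_rpow (by norm_num) hg0
      _ ≤ _ := by gcongr; linarith
  · calc (|f s| + |g s|) ^ α ≤ (2 * |f s|) ^ α := by gcongr; linarith
      _ = 2 ^ α * |f s| ^ α := Real.mul_rpow (by norm_num) hf0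
      _ ≤ _ := by gcongr; linarith

lemma lin_bd (u v R a b : ℝ) (hu : |u| ≤ R) (hv : |v| ≤ R) : |u * a + v * b| ≤ R * (|a| + |b|) := by
  calc _ ≤ |u| * |a| + |v| * |b| := by
        rw [← abs_mul, ← abs_mul]; exact abs_add_le _ _
    _ ≤ R * |a| + R * |b| := by gcongr
    _ = _ := by ring

lemma int_NN (hα1 : 1 < α) (hf : MemLalpha α μ f) (hg : MemLalpha α μ g) (u v : ℝ) :
    Integrable (fun s => |u * f s + v * g s| ^ α) μ := by
  have hfm := hf.1.aemeasurable
  have hgm := hg.1.aemeasurable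
  refine ((int_sum hα1 hf hg).const_mul ((|u| + |v|) ^ α)).mono' 
    (by fun_prop : AEMeasurable _ μ).aestronglyMeasurable ?_
  filter_upwards with s
  rw [Real.norm_of_nonneg (by positivity), ← Real.mul_rpow (by positivity) (by positivity)]
  gcongr
  exact lin_bd _ _ _ _ _ (by linarith [abs_nonneg v]) (by linarith [abs_nonneg u])

lemma NU_bd (hα1 : 1 < α) (u v R a b : ℝ) (hu : |u| ≤ R) (hv : |v| ≤ R) :
    ‖α * |u * a + v * b| ^ (α - 2) * (u * a + v * b) * a‖ ≤ α * R ^ (α - 1) * (|a| + |b|) ^ α := by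
  have hR : 0 ≤ R := (abs_nonneg u).trans hu
  rw [norm_mul, norm_mul, norm_mul, Real.norm_of_nonneg (by linarith : 0 ≤ α),
    Real.norm_of_nonneg (by positivity : 0 ≤ |u * a + v * b| ^ (α - 2)), Real.norm_eq_abs, Real.norm_eq_abs,
    mul_assoc α, abs_spow α hα1]
  calc _ ≤ α * (R * (|a| + |b|)) ^ (α - 1) * (|a| + |b|) := by
        gcongr
        · exact lin_bd _ _ _ _ _ hu hv
        · linarith [abs_nonneg b]
    _ = α * R ^ (α - 1) * ((|a| + |b|) ^ (α - 1) * (|a| + |b|)) := by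
        rw [Real.mul_rpow hR (by positivity)]; ring
    _ = _ := by rw [abs_spow' α hα1 _ (by positivity)]

lemma int_NU (hα1 : 1 < α) (hf : MemLalpha α μ f) (hg : MemLalpha α μ g) (u v : ℝ) :
    Integrable (fun s => α * |u * f s + v * g s| ^ (α - 2) * (u * f s + v * g s) * f s) μ := by
  have hfm := hf.1.aemeasurable
  have hgm := hg.1.aemeasurable
  refine ((int_sum hα1 hf hg).const_mul (α * (|u| + |v|) ^ (α - 1))).mono' 
    (by fun_prop : AEMeasurable _ μ).aestronglyMeasurable ?_
  filter_upwards with s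
  exact NU_bd hα1 _ _ _ _ _ (by linarith [abs_nonneg v]) (by linarith [abs_nonneg u])

lemma hasDerivAt_NN (hα1 : 1 < α) (hf : MemLalpha α μ f) (hg : MemLalpha α μ g) (u v : ℝ) :
    HasDerivAt (fun u => NN α μ f g u v) (NU α μ f g u v) u := by
  have hfm := hf.1.aemeasurable
  have hgm := hg.1.aemeasurable
  unfold NN NU
  refine (hasDerivAt_integral_of_dominated_loc_of_deriv_le (s := Metric.ball u 1)
    (bound := fun s => α * (|u| + 1 + |v|) ^ (α - 1) * (|f s| + |g s|) ^ α)
    (F := fun u s => |u * f s + v * g s| ^ α) 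
    (F' := fun u s => α * |u * f s + v * g s| ^ (α - 2) * (u * f s + v * g s) * f s)
    (Metric.ball_mem_nhds u one_pos) ?_ (int_NN hα1 hf hg u v) (int_NU hα1 hf hg u v).1 ?_ 
    ((int_sum hα1 hf hg).const_mul _) ?_).2
  · filter_upwards with x
    exact (int_NN hα1 hf hg x v).1
  · filter_upwards with s x hx
    apply NU_bd hα1
    · rw [Metric.mem_ball, Real.dist_eq] at hx
      have : |x| ≤ |u| + |x - u| := by
        have := abs_add_le u (x - u); simpa using this
      linarith [abs_nonneg v]
    · linarith [abs_nonneg u]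
  · filter_upwards with s x hx
    have h1 : HasDerivAt (fun x : ℝ => x * f s + v * g s) (f s) x := by
      simpa using ((hasDerivAt_id x).mul_const (f s)).add_const (v * g s)
    exact (hasDerivAt_abs_rpow (x * f s + v * g s) hα1).comp x h1

lemma int_dep1s (hα1 : 1 < α) (hf : MemLalpha α μ f) (hg : MemLalpha α μ g) :
    Integrable (fun s => |g s| ^ (α - 1) * |f s|) μ := by
  have hfm := hf.1.aemeasurable
  have hgm := hg.1.aemeasurable
  refine (int_sum hα1 hf hg).mono' (by fun_prop : AEMeasurable _ μ).aestronglyMeasurable ?_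
  filter_upwards with s
  rw [Real.norm_of_nonneg (by positivity), ← abs_spow' α hα1 _ (by positivity)]
  have hf0 := abs_nonneg (f s)
  have hg0 := abs_nonneg (g s)
  gcongr <;> linarith

lemma int_dep2 (hα1 : 1 < α) (hf : MemLalpha α μ f) (hg : MemLalpha α μ g) :
    Integrable (fun s => |f s * g s| ^ (α / 2)) μ := by
  have hfm := hf.1.aemeasurable
  have hgm := hg.1.aemeasurable
  refine (int_sum hα1 hf hg).mono' (by fun_prop : AEMeasurable _ μ).aestronglyMeasurable ?_
  filter_upwards with s
  rw [Real.norm_of_nonneg (by positivity)]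
  have hf0 := abs_nonneg (f s)
  have hg0 := abs_nonneg (g s)
  calc |f s * g s| ^ (α / 2) ≤ ((|f s| + |g s|) ^ (2:ℝ)) ^ (α / 2) := by
        gcongr
        rw [abs_mul, Real.rpow_two]; nlinarith
    _ = _ := by rw [← Real.rpow_mul (by positivity)]; congr 1; ring

lemma NU_diff (hα1 : 1 < α) (hα2 : α < 2) (hf : MemLalpha α μ f) (hg : MemLalpha α μ g) (u v : ℝ) :
    |NU α μ f g u v - NU α μ f g u 0| ≤ 4 * |v| ^ (α - 1) * dep1s α μ g f := by
  unfold NU dep1s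
  rw [← integral_sub (int_NU hα1 hf hg u v) (int_NU hα1 hf hg u 0), ← integral_const_mul, ← Real.norm_eq_abs]
  refine norm_integral_le_of_norm_le ((int_dep1s hα1 hf hg).const_mul _) ?_
  filter_upwards with s
  have h := spow_diff α hα1 hα2 (u * f s + v * g s) (u * f s + 0 * g s)
  have e : u * f s + v * g s - (u * f s + 0 * g s) = v * g s := by ring
  rw [e, abs_mul, Real.mul_rpow (abs_nonneg _) (abs_nonneg _)] at h
  set A := |u * f s + v * g s| ^ (α - 2) * (u * f s + v * g s)
  set B := |u * f s + 0 * g s| ^ (α - 2) * (u * f s + 0 * g s)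
  calc _ = ‖α * (A - B) * f s‖ := by congr 1; simp only [A, B]; ring
    _ = α * |A - B| * |f s| := by
      rw [norm_mul, norm_mul, Real.norm_of_nonneg (by linarith : 0 ≤ α), Real.norm_eq_abs, Real.norm_eq_abs]
    _ ≤ 2 * (2 * (|v| ^ (α - 1) * |g s| ^ (α - 1))) * |f s| := by gcongr
    _ = _ := by ring

lemma NN_diff (hα1 : 1 < α) (hα2 : α < 2) (hf : MemLalpha α μ f) (hg : MemLalpha α μ g) (u v : ℝ) :
    |NN α μ f g u v - NN α μ f g u 0 - NN α μ f g 0 v| ≤ 5 * (|u| ^ (α / 2) * |v| ^ (α / 2)) * dep2 α μ f g := by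
  unfold NN dep2
  have hsub : Integrable (fun s => |u * f s + v * g s| ^ α - |u * f s + 0 * g s| ^ α) μ :=
    (int_NN hα1 hf hg u v).sub (int_NN hα1 hf hg u 0)
  rw [← integral_sub (int_NN hα1 hf hg u v) (int_NN hα1 hf hg u 0), 
    ← integral_sub hsub (int_NN hα1 hf hg 0 v),
    ← integral_const_mul, ← Real.norm_eq_abs]
  refine norm_integral_le_of_norm_le ((int_dep2 hα1 hf hg).const_mul _) ?_
  filter_upwards with s
  have h := pow_sum_diff α hα1 hα2 (u * f s) (v * g s)
  rw [show u * f s * (v * g s) = u * v * (f s * g s) by ring, abs_mul (u * v) (f s * g s),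
    abs_mul u v, 
    Real.mul_rpow (x := |u| * |v|) (by positivity) (by positivity), 
    Real.mul_rpow (x := |u|) (y := |v|) (by positivity) (by positivity)] at h
  simp only [zero_mul, add_zero, zero_add, Real.norm_eq_abs]
  linarith

lemma NN_u0 (u : ℝ) : NN α μ f g u 0 = |u| ^ α * ∫ s, |f s| ^ α ∂μ := by
  unfold NN
  rw [← integral_const_mul]
  congr 1; ext s
  rw [zero_mul, add_zero, abs_mul, Real.mul_rpow (abs_nonneg _) (abs_nonneg _)]

lemma NN_0v (v : ℝ) : NN α μ f g 0 v = |v| ^ α * ∫ s, |g s| ^ α ∂μ := by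
  unfold NN
  rw [← integral_const_mul]
  congr 1; ext s
  rw [zero_mul, zero_add, abs_mul, Real.mul_rpow (abs_nonneg _) (abs_nonneg _)]

lemma NU_u0 (hα1 : 1 < α) (hα2 : α < 2) (hf : MemLalpha α μ f) (u : ℝ) :
    |NU α μ f g u 0| ≤ 2 * |u| ^ (α - 1) * ∫ s, |f s| ^ α ∂μ := by
  unfold NU
  rw [← integral_const_mul, ← Real.norm_eq_abs]
  refine norm_integral_le_of_norm_le (hf.2.const_mul _) ?_
  filter_upwards with s
  rw [zero_mul, add_zero, norm_mul, norm_mul, norm_mul, Real.norm_of_nonneg (by linarith : 0 ≤ α),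
    Real.norm_of_nonneg (by positivity : 0 ≤ |u * f s| ^ (α - 2)), Real.norm_eq_abs, Real.norm_eq_abs,
    mul_assoc α, abs_spow α hα1, abs_mul, Real.mul_rpow (abs_nonneg _) (abs_nonneg _), 
    ← abs_spow' α hα1 (|f s|) (abs_nonneg _)]
  calc α * (|u| ^ (α - 1) * |f s| ^ (α - 1)) * |f s| ≤ 2 * (|u| ^ (α - 1) * |f s| ^ (α - 1)) * |f s| := by gcongr
    _ = _ := by ring

end

lemma exp_diff (A B m : ℝ) (hA : m ≤ A) (hB : m ≤ B) :
    |Real.exp (-A) - Real.exp (-B)| ≤ |A - B| * Real.exp (-m) := by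
  wlog h : A ≤ B generalizing A B
  · have := this B A hB hA (le_of_not_ge h)
    rwa [abs_sub_comm, abs_sub_comm A B]
  have h1 : Real.exp (-B) ≤ Real.exp (-A) := Real.exp_le_exp.2 (by linarith)
  rw [abs_of_nonneg (by linarith), abs_of_nonpos (by linarith)]
  have h2 := Real.add_one_le_exp (-(B - A))
  have h3 : Real.exp (-B) = Real.exp (-A) * Real.exp (-(B - A)) := by
    rw [← Real.exp_add]; congr 1; ring
  have h4 : Real.exp (-A) ≤ Real.exp (-m) := Real.exp_le_exp.2 (by linarith)
  rw [h3]
  have h5 := Real.exp_pos (-A)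
  nlinarith

lemma decay1 (c α q : ℝ) (hc : 0 < c) (hα : 1 < α) (hq : 0 ≤ q) :
    ∃ B > 0, ∀ x : ℝ, 0 ≤ x → x ^ q * Real.exp (-(c * x ^ α)) ≤ B := by
  set n := ⌈q⌉₊ with hn
  refine ⟨1 + n.factorial / c ^ n, by positivity, fun x hx => ?_⟩
  have hp : (0:ℝ) ≤ n.factorial / c ^ n := by positivity
  have he1 : Real.exp (-(c * x ^ α)) ≤ 1 := Real.exp_le_one_iff.2 (by have : 0 ≤ c * x ^ α := by positivity
                                                                      linarith)
  rcases le_total x 1 with h | h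
  · have : x ^ q ≤ 1 := Real.rpow_le_one hx h hq
    have h2 : x ^ q * Real.exp (-(c * x ^ α)) ≤ 1 * 1 := by gcongr
    linarith
  · have h1 : x ^ q ≤ x ^ n := by
      rw [← Real.rpow_natCast]
      exact Real.rpow_le_rpow_of_exponent_le h (Nat.le_ceil q)
    have h2 : x ≤ x ^ α := by
      conv_lhs => rw [← Real.rpow_one x]
      exact Real.rpow_le_rpow_of_exponent_le h hα.le
    have h3 : Real.exp (-(c * x ^ α)) ≤ Real.exp (-(c * x)) := Real.exp_le_exp.2 (by nlinarith)
    have h4 := Real.pow_div_factorial_le_exp (c * x) (by positivity) n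
    have h5 : x ^ n ≤ n.factorial / c ^ n * Real.exp (c * x) := by
      rw [mul_pow, div_le_iff₀ (by positivity)] at h4
      rw [div_mul_eq_mul_div, le_div_iff₀ (by positivity)]
      linarith
    calc x ^ q * Real.exp (-(c * x ^ α)) ≤ x ^ n * Real.exp (-(c * x)) := by gcongr
      _ ≤ (n.factorial / c ^ n * Real.exp (c * x)) * Real.exp (-(c * x)) := by gcongr
      _ = n.factorial / c ^ n := by rw [mul_assoc, ← Real.exp_add]; simp
      _ ≤ _ := by linarith

lemma decay (c α q : ℝ) (hc : 0 < c) (hα : 1 < α) (hq : 0 ≤ q) :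
    ∃ B > 0, ∀ x : ℝ, |x| ^ q * Real.exp (-(c * |x| ^ α)) ≤ B * (1 + x ^ 2)⁻¹ := by
  obtain ⟨B1, hB1, h1⟩ := decay1 c α q hc hα hq
  obtain ⟨B2, hB2, h2⟩ := decay1 c α (q + 2) hc hα (by linarith)
  refine ⟨B1 + B2, by positivity, fun x => ?_⟩
  rw [← div_eq_mul_inv, le_div_iff₀ (by positivity)]
  have e : |x| ^ (q + 2) = |x| ^ q * x ^ 2 := by
    rw [Real.rpow_add_of_nonneg (abs_nonneg _) hq (by norm_num), Real.rpow_two, sq_abs]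
  have := h1 |x| (abs_nonneg _)
  have h3 := h2 |x| (abs_nonneg _)
  rw [e] at h3
  nlinarith

lemma dep1s_nonneg {α : ℝ} {S : Type*} [MeasurableSpace S] (μ : Measure S) (f g : S → ℝ) : 0 ≤ dep1s α μ f g :=
  integral_nonneg fun s => by positivity

lemma dep2_nonneg {α : ℝ} {S : Type*} [MeasurableSpace S] (μ : Measure S) (f g : S → ℝ) : 0 ≤ dep2 α μ f g :=
  integral_nonneg fun s => by positivity

lemma R_bound (α ε nf ng : ℝ) (hα1 : 1 < α) (hα2 : α < 2) (hε : 0 < ε) (hnf : 0 < nf) (hng : 0 < ng) :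
    ∃ C > 0, ∀ (S : Type) [MeasurableSpace S] (μ : Measure S) (f g : S → ℝ), 
      MemLalpha α μ f → MemLalpha α μ g → nrm α μ f = nf → nrm α μ g = ng → A2 α ε μ f g →
      ∀ u v : ℝ, |NU α μ f g u v * Real.exp (-NN α μ f g u v) - 
        NU α μ f g u 0 * Real.exp (-(NN α μ f g u 0 + NN α μ f g 0 v))| ≤
        C * (dep1s α μ g f + dep2 α μ f g) * ((1 + u ^ 2)⁻¹ * (1 + v ^ 2)⁻¹) := by
  set c := min ε 1 * min (nf ^ α) (ng ^ α) with hc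
  have hcp : 0 < c := by positivity
  have hα0 : 0 < α := by linarith
  obtain ⟨B0, hB0, h0⟩ := decay c α 0 hcp hα1 le_rfl
  obtain ⟨B1, hB1, h1⟩ := decay c α (α - 1) hcp hα1 (by linarith)
  obtain ⟨B2, hB2, h2⟩ := decay c α (α - 1 + α / 2) hcp hα1 (by linarith)
  obtain ⟨B3, hB3, h3⟩ := decay c α (α / 2) hcp hα1 (by linarith)
  refine ⟨4 * (B0 * B1) + 10 * nf ^ α * (B2 * B3), by positivity, ?_⟩
  intro S _ μ f g hf hg hnf' hng' hA2 u v
  have hIf : ∫ s, |f s| ^ α ∂μ = nf ^ α := by rw [← nrm_pow α hα0, hnf']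
  have hIg : ∫ s, |g s| ^ α ∂μ = ng ^ α := by rw [← nrm_pow α hα0, hng']
  set d1 := dep1s α μ g f with hd1
  set d2 := dep2 α μ f g with hd2
  have hd1n : 0 ≤ d1 := dep1s_nonneg _ _ _
  have hd2n : 0 ≤ d2 := dep2_nonneg _ _ _
  set m := c * |u| ^ α + c * |v| ^ α with hm
  have hu0 : 0 ≤ |u| ^ α := by positivity
  have hv0 : 0 ≤ |v| ^ α := by positivity
  have hcf1 : c ≤ 1 * nf ^ α := mul_le_mul (min_le_right _ _) (min_le_left _ _) (by positivity) (by norm_num)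
  have hcg1 : c ≤ 1 * ng ^ α := mul_le_mul (min_le_right _ _) (min_le_right _ _) (by positivity) (by norm_num)
  have hcf2 : c ≤ ε * nf ^ α := mul_le_mul (min_le_left _ _) (min_le_left _ _) (by positivity) hε.le
  have hcg2 : c ≤ ε * ng ^ α := mul_le_mul (min_le_left _ _) (min_le_right _ _) (by positivity) hε.le
  have hmA : m ≤ NN α μ f g u v := by
    have := hA2 u v
    rw [nrm_pow α hα0, hnf', hng'] at this
    unfold NN
    nlinarith
  have hmB : m ≤ NN α μ f g u 0 + NN α μ f g 0 v := by
    rw [NN_u0, NN_0v, hIf, hIg]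
    nlinarith
  have hdiff := exp_diff _ _ m hmA hmB
  have hNN := NN_diff hα1 hα2 hf hg u v
  rw [sub_sub] at hNN
  have hNU := NU_diff hα1 hα2 hf hg u v
  have hNU0 := NU_u0 (g := g) hα1 hα2 hf u
  rw [hIf] at hNU0
  have hexpm : Real.exp (-m) = Real.exp (-(c * |u| ^ α)) * Real.exp (-(c * |v| ^ α)) := by
    rw [← Real.exp_add, hm]; congr 1; ring
  have hexpA : Real.exp (-NN α μ f g u v) ≤ Real.exp (-m) := Real.exp_le_exp.2 (by linarith)
  have t0 := h0 u
  have t1 := h1 v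
  have t2 := h2 u
  have t3 := h3 v
  rw [Real.rpow_zero, one_mul] at t0
  rw [Real.rpow_add_of_nonneg (abs_nonneg _) (by linarith) (by linarith)] at t2
  set iu := (1 + u ^ 2)⁻¹ with hiu
  set iv := (1 + v ^ 2)⁻¹ with hiv
  have hiup : 0 < iu := by positivity
  have hivp : 0 < iv := by positivity
  calc |NU α μ f g u v * Real.exp (-NN α μ f g u v) - 
        NU α μ f g u 0 * Real.exp (-(NN α μ f g u 0 + NN α μ f g 0 v))|
      = |(NU α μ f g u v - NU α μ f g u 0) * Real.exp (-NN α μ f g u v) + 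
        NU α μ f g u 0 * (Real.exp (-NN α μ f g u v) - Real.exp (-(NN α μ f g u 0 + NN α μ f g 0 v)))| := by
        congr 1; ring
    _ ≤ |NU α μ f g u v - NU α μ f g u 0| * Real.exp (-NN α μ f g u v) + 
        |NU α μ f g u 0| * |Real.exp (-NN α μ f g u v) - Real.exp (-(NN α μ f g u 0 + NN α μ f g 0 v))| := by
        refine (abs_add_le _ _).trans (le_of_eq ?_)
        rw [abs_mul, abs_mul, abs_of_pos (Real.exp_pos _)]
    _ ≤ (4 * |v| ^ (α - 1) * d1) * Real.exp (-m) + 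
        (2 * |u| ^ (α - 1) * nf ^ α) * ((5 * (|u| ^ (α / 2) * |v| ^ (α / 2)) * d2) * Real.exp (-m)) := by
        gcongr
        exact hdiff.trans (by gcongr)
    _ = (4 * d1) * (Real.exp (-(c * |u| ^ α)) * (|v| ^ (α - 1) * Real.exp (-(c * |v| ^ α)))) +
        (10 * nf ^ α * d2) * ((|u| ^ (α - 1) * |u| ^ (α / 2) * Real.exp (-(c * |u| ^ α))) * (|v| ^ (α / 2) * Real.exp (-(c * |v| ^ α)))) := by
        rw [hexpm]; ring
    _ ≤ (4 * d1) * ((B0 * iu) * (B1 * iv)) + (10 * nf ^ α * d2) * ((B2 * iu) * (B3 * iv)) := by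
        gcongr
    _ ≤ (4 * (d1 + d2)) * ((B0 * iu) * (B1 * iv)) + (10 * nf ^ α * (d1 + d2)) * ((B2 * iu) * (B3 * iv)) := by
        gcongr <;> linarith
    _ = _ := by ring

lemma int_expI {Ω : Type*} [MeasurableSpace Ω] {P : Measure Ω} {W : Ω → ℂ} (hW : Integrable W P)
    {θ : Ω → ℝ} (hθ : Measurable θ) :
    Integrable (fun ω => W ω * Complex.exp (Complex.I * ((θ ω : ℝ) : ℂ))) P := by
  have := hW.bdd_mul (c := 1) (f := fun ω => Complex.exp (Complex.I * ((θ ω : ℝ) : ℂ))) 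
    (by fun_prop : Measurable _).aestronglyMeasurable (by
      filter_upwards with ω
      rw [mul_comm, Complex.norm_exp_ofReal_mul_I])
  exact this.congr (by filter_upwards with ω; ring)

section
variable {α : ℝ} {S : Type*} [MeasurableSpace S] {μ : Measure S} {f g : S → ℝ}
  {Ω : Type*} [MeasurableSpace Ω] {P : Measure Ω} [IsProbabilityMeasure P] {ξ η : Ω → ℝ}

lemma xi_int (hα1 : 1 < α) (hξ : Measurable ξ) (hJ : JointSAS α μ f g P ξ η) : Integrable ξ P := by
  refine moment P ξ hξ (∫ s, |f s| ^ α ∂μ) α (integral_nonneg fun s => by positivity) hα1 ?_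
  intro u
  have := hJ u 0
  rw [nrm_pow α (by linarith)] at this
  have h2 := NN_u0 (α := α) (μ := μ) (f := f) (g := g) u
  unfold NN at h2
  rw [h2] at this
  simp only [zero_mul, add_zero] at this
  rw [this, mul_comm]

lemma J_NN (hα1 : 1 < α) (hJ : JointSAS α μ f g P ξ η) (u v : ℝ) :
    ∫ ω, Complex.exp (Complex.I * ((u * ξ ω + v * η ω : ℝ) : ℂ)) ∂P = Complex.exp (-(NN α μ f g u v : ℂ)) := by
  rw [hJ u v, nrm_pow α (by linarith)]; rfl

lemma J_deriv (hα1 : 1 < α) (hf : MemLalpha α μ f) (hg : MemLalpha α μ g) (hξ : Measurable ξ) (hη : Measurable η) 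
    (hJ : JointSAS α μ f g P ξ η) (u v : ℝ) :
    ∫ ω, (ξ ω : ℂ) * Complex.exp (Complex.I * ((u * ξ ω + v * η ω : ℝ) : ℂ)) ∂P = 
      Complex.I * ((NU α μ f g u v * Real.exp (-NN α μ f g u v) : ℝ) : ℂ) := by
  have hξi := xi_int hα1 hξ hJ
  have d1 : HasDerivAt (fun u => ∫ ω, Complex.exp (Complex.I * ((u * ξ ω + v * η ω : ℝ) : ℂ)) ∂P)
      (∫ ω, Complex.I * ((ξ ω : ℂ) * Complex.exp (Complex.I * ((u * ξ ω + v * η ω : ℝ) : ℂ))) ∂P) u := by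
    refine (hasDerivAt_integral_of_dominated_loc_of_deriv_le (s := Metric.ball u 1)
      (bound := fun ω => |ξ ω|)
      (F := fun (u : ℝ) ω => Complex.exp (Complex.I * ((u * ξ ω + v * η ω : ℝ) : ℂ))) 
      (F' := fun (u : ℝ) ω => Complex.I * ((ξ ω : ℂ) * Complex.exp (Complex.I * ((u * ξ ω + v * η ω : ℝ) : ℂ))))
      (Metric.ball_mem_nhds u one_pos) ?_ ?_ ?_ ?_ hξi.abs ?_).2
    · filter_upwards with x
      exact (by fun_prop : Measurable _).aestronglyMeasurable
    · have := int_expI (P := P) (W := fun _ => 1) (integrable_const _) (θ := fun ω => u * ξ ω + v * η ω) (by fun_prop)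
      simpa using this
    · exact (by fun_prop : Measurable _).aestronglyMeasurable
    · filter_upwards with ω x hx
      rw [norm_mul, norm_mul, mul_comm Complex.I ((_ : ℝ) : ℂ), Complex.norm_exp_ofReal_mul_I]
      simp
    · filter_upwards with ω x hx
      have h1 : HasDerivAt (fun x : ℝ => x * ξ ω + v * η ω) (ξ ω) x := by
        simpa using ((hasDerivAt_id x).mul_const (ξ ω)).add_const (v * η ω)
      have h2 := (h1.ofReal_comp.const_mul Complex.I).cexp
      refine h2.congr_deriv ?_
      generalize Complex.exp _ = z
      ring
  have d2 : HasDerivAt (fun u => Complex.exp (-(NN α μ f g u v : ℂ)))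
      (Complex.exp (-(NN α μ f g u v : ℂ)) * -(NU α μ f g u v : ℂ)) u :=
    ((hasDerivAt_NN hα1 hf hg u v).ofReal_comp.neg).cexp
  have e : (fun u => ∫ ω, Complex.exp (Complex.I * ((u * ξ ω + v * η ω : ℝ) : ℂ)) ∂P) = 
      (fun u => Complex.exp (-(NN α μ f g u v : ℂ))) := by
    ext u; exact J_NN hα1 hJ u v
  rw [e] at d1
  have h := d1.unique d2
  rw [integral_const_mul] at h
  rw [Complex.ofReal_mul, Complex.ofReal_exp, Complex.ofReal_neg]
  have hI : Complex.I * Complex.I = -1 := Complex.I_mul_I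
  linear_combination (-Complex.I) * h + (∫ ω, (ξ ω : ℂ) * Complex.exp (Complex.I * ((u * ξ ω + v * η ω : ℝ) : ℂ)) ∂P) * hI

lemma T_eq (hα1 : 1 < α) (hf : MemLalpha α μ f) (hg : MemLalpha α μ g) (hξ : Measurable ξ) (hη : Measurable η) 
    (hJ : JointSAS α μ f g P ξ η) (u v : ℝ) :
    ‖∫ ω, (ξ ω : ℂ) * Complex.exp (Complex.I * ((u * ξ ω + v * η ω : ℝ) : ℂ)) ∂P - 
      (∫ ω, (ξ ω : ℂ) * Complex.exp (Complex.I * ((u * ξ ω : ℝ) : ℂ)) ∂P) * 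
      (∫ ω, Complex.exp (Complex.I * ((v * η ω : ℝ) : ℂ)) ∂P)‖ = 
      |NU α μ f g u v * Real.exp (-NN α μ f g u v) - 
        NU α μ f g u 0 * Real.exp (-(NN α μ f g u 0 + NN α μ f g 0 v))| := by
  have h1 := J_deriv hα1 hf hg hξ hη hJ u v
  have h2 := J_deriv hα1 hf hg hξ hη hJ u 0
  have h3 := J_NN hα1 hJ 0 v
  simp only [zero_mul, add_zero, zero_add] at h2 h3
  rw [h1, h2, h3, ← Complex.ofReal_neg, ← Complex.ofReal_exp, mul_assoc, ← mul_sub, ← Complex.ofReal_mul,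
    ← Complex.ofReal_sub, norm_mul, Complex.norm_I, one_mul, Complex.norm_real, Real.norm_eq_abs]
  congr 2
  rw [neg_add, Real.exp_add]; ring
end

/-- One-dimensional transforms are continuous. -/
lemma cont_w {Ω : Type*} [MeasurableSpace Ω] {P : Measure Ω} {W : Ω → ℂ} (hW : Integrable W P)
    {X : Ω → ℝ} (hX : Measurable X) :
    Continuous (fun v : ℝ => ∫ ω, W ω * Complex.exp (Complex.I * ((2 * π * v * X ω : ℝ) : ℂ)) ∂P) := by
  refine continuous_of_dominated (bound := fun ω => ‖W ω‖) ?_ ?_ hW.norm ?_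
  · intro v
    exact (int_expI hW (θ := fun ω => 2 * π * v * X ω) (by fun_prop)).aestronglyMeasurable
  · intro v
    filter_upwards with ω
    rw [norm_mul, mul_comm Complex.I, Complex.norm_exp_ofReal_mul_I, mul_one]
  · filter_upwards with ω
    fun_prop

lemma norm_four_le (L : ℝ → ℂ) (v : ℝ) : ‖FourierTransform.fourier L v‖ ≤ ∫ x, ‖L x‖ := by
  rw [Real.fourier_eq']
  refine (norm_integral_le_integral_norm _).trans (le_of_eq ?_)
  congr 1; ext x
  rw [norm_smul, Complex.norm_exp_ofReal_mul_I, one_mul]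

lemma inv_scale (v : ℝ) : (1 + (2 * π * v) ^ 2)⁻¹ ≤ (1 + v ^ 2)⁻¹ := by
  have h : 1 ≤ (2 * π) ^ 2 := by nlinarith [Real.pi_gt_three]
  have : v ^ 2 ≤ (2 * π * v) ^ 2 := by rw [mul_pow]; nlinarith [sq_nonneg v]
  gcongr

section
variable {Ω : Type*} [MeasurableSpace Ω] {P : Measure Ω} [IsProbabilityMeasure P] {ξ η : Ω → ℝ}

lemma core1 (hξ : Measurable ξ) (hη : Measurable η) (hξi : Integrable ξ P) (D : ℝ) (hD : 0 ≤ D)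
    (hT : ∀ u v : ℝ, ‖∫ ω, (ξ ω : ℂ) * Complex.exp (Complex.I * ((u * ξ ω + v * η ω : ℝ) : ℂ)) ∂P - 
      (∫ ω, (ξ ω : ℂ) * Complex.exp (Complex.I * ((u * ξ ω : ℝ) : ℂ)) ∂P) * 
      (∫ ω, Complex.exp (Complex.I * ((v * η ω : ℝ) : ℂ)) ∂P)‖ ≤ D * ((1 + u ^ 2)⁻¹ * (1 + v ^ 2)⁻¹))
    (L : ℝ → ℝ) (hLm : Measurable L) (B : ℝ) (hB : ∀ x, |L x| ≤ B) (hL : Integrable L) (u : ℝ) :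
    ‖∫ ω, (((ξ ω : ℝ) : ℂ) * ((L (η ω) : ℂ) - ((∫ ω, L (η ω) ∂P : ℝ) : ℂ))) * 
      Complex.exp (Complex.I * ((2 * π * u * ξ ω : ℝ) : ℂ)) ∂P‖ ≤ 
      π * D * (∫ x, |L x|) * (1 + u ^ 2)⁻¹ := by
  set m := ∫ ω, L (η ω) ∂P with hm
  set c := ∫ ω, (ξ ω : ℂ) * Complex.exp (Complex.I * ((2 * π * u * ξ ω : ℝ) : ℂ)) ∂P with hc
  have hξc : Integrable (fun ω => (ξ ω : ℂ)) P := hξi.ofReal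
  have he : Integrable (fun ω => (ξ ω : ℂ) * Complex.exp (Complex.I * ((2 * π * u * ξ ω : ℝ) : ℂ))) P :=
    int_expI hξc (by fun_prop)
  have hLη : Integrable (fun ω => (L (η ω) : ℂ)) P := by
    refine Integrable.of_bound (C := B) (by fun_prop : Measurable _).aestronglyMeasurable ?_
    filter_upwards with ω
    rw [Complex.norm_real]; exact hB _
  have heL : Integrable (fun ω => (ξ ω : ℂ) * Complex.exp (Complex.I * ((2 * π * u * ξ ω : ℝ) : ℂ)) * (L (η ω) : ℂ)) P := by
    refine he.mul_bdd (c := B) (by fun_prop : Measurable _).aestronglyMeasurable ?_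
    filter_upwards with ω
    rw [Complex.norm_real]; exact hB _
  have hmc : (m : ℂ) = ∫ ω, (L (η ω) : ℂ) ∂P := by rw [hm]; exact integral_ofReal.symm
  set W : Ω → ℂ := fun ω => (ξ ω : ℂ) * Complex.exp (Complex.I * ((2 * π * u * ξ ω : ℝ) : ℂ)) - c with hWd
  have hW : Integrable W P := he.sub (integrable_const c)
  have e1 : ∫ ω, (((ξ ω : ℝ) : ℂ) * ((L (η ω) : ℂ) - (m : ℂ))) * 
      Complex.exp (Complex.I * ((2 * π * u * ξ ω : ℝ) : ℂ)) ∂P = ∫ ω, W ω * (L (η ω) : ℂ) ∂P := by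
    have a1 : ∀ ω, (((ξ ω : ℝ) : ℂ) * ((L (η ω) : ℂ) - (m : ℂ))) * 
      Complex.exp (Complex.I * ((2 * π * u * ξ ω : ℝ) : ℂ)) = 
      (ξ ω : ℂ) * Complex.exp (Complex.I * ((2 * π * u * ξ ω : ℝ) : ℂ)) * (L (η ω) : ℂ) - 
      (ξ ω : ℂ) * Complex.exp (Complex.I * ((2 * π * u * ξ ω : ℝ) : ℂ)) * m := fun ω => by ring
    have a2 : ∀ ω, W ω * (L (η ω) : ℂ) = 
      (ξ ω : ℂ) * Complex.exp (Complex.I * ((2 * π * u * ξ ω : ℝ) : ℂ)) * (L (η ω) : ℂ) - c * (L (η ω) : ℂ) := 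
      fun ω => by simp only [hWd]; ring
    simp only [a1, a2]
    rw [integral_sub heL (he.mul_const _), integral_sub heL (hLη.const_mul _), integral_mul_const,
      integral_const_mul, hmc]
  have e2 : ∀ v : ℝ, ‖∫ ω, W ω * Complex.exp (Complex.I * ((2 * π * v * η ω : ℝ) : ℂ)) ∂P‖ ≤ 
      D * (1 + u ^ 2)⁻¹ * (1 + v ^ 2)⁻¹ := by
    intro v
    have := hT (2 * π * u) (2 * π * v)
    have hi1 : Integrable (fun ω => (ξ ω : ℂ) * Complex.exp (Complex.I * ((2 * π * u * ξ ω + 2 * π * v * η ω : ℝ) : ℂ))) P :=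
      int_expI hξc (by fun_prop)
    have hi2 : Integrable (fun ω => Complex.exp (Complex.I * ((2 * π * v * η ω : ℝ) : ℂ))) P := by
      simpa using int_expI (P := P) (W := fun _ => 1) (integrable_const _) (θ := fun ω => 2 * π * v * η ω) (by fun_prop)
    have e3 : ∫ ω, W ω * Complex.exp (Complex.I * ((2 * π * v * η ω : ℝ) : ℂ)) ∂P = 
        ∫ ω, (ξ ω : ℂ) * Complex.exp (Complex.I * ((2 * π * u * ξ ω + 2 * π * v * η ω : ℝ) : ℂ)) ∂P - 
        c * ∫ ω, Complex.exp (Complex.I * ((2 * π * v * η ω : ℝ) : ℂ)) ∂P := by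
      rw [← integral_const_mul, ← integral_sub hi1 (hi2.const_mul _)]
      congr 1; ext ω
      rw [Complex.ofReal_add, mul_add, Complex.exp_add]
      simp only [hWd]; ring
    rw [e3]
    refine this.trans ?_
    rw [mul_assoc D]
    have h1 := inv_scale u
    have h2 := inv_scale v
    gcongr
  have hwi : Integrable (fun v : ℝ => ∫ ω, W ω * Complex.exp (Complex.I * ((2 * π * v * η ω : ℝ) : ℂ)) ∂P) := by
    refine (integrable_inv_one_add_sq.const_mul (D * (1 + u ^ 2)⁻¹)).mono' 
      (cont_w hW hη).aestronglyMeasurable ?_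
    filter_upwards with v using e2 v
  have hp := pars P η hη W hW hwi (fun x => (L x : ℂ)) (by fun_prop) B 
    (fun x => by rw [Complex.norm_real]; exact hB x) hL.ofReal
  rw [e1, hp]
  calc _ ≤ ∫ v : ℝ, (D * (1 + u ^ 2)⁻¹ * (∫ x, |L x|)) * (1 + v ^ 2)⁻¹ := by
        refine norm_integral_le_of_norm_le (integrable_inv_one_add_sq.const_mul _) ?_
        filter_upwards with v
        rw [norm_mul]
        have h1 := norm_four_le (fun x => (L x : ℂ)) v
        simp only [Complex.norm_real, Real.norm_eq_abs] at h1
        calc _ ≤ (D * (1 + u ^ 2)⁻¹ * (1 + v ^ 2)⁻¹) * (∫ x, |L x|) := by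
              gcongr
              exact e2 v
          _ = _ := by ring
    _ = _ := by
        rw [integral_const_mul, integral_univ_inv_one_add_sq]; ring

lemma core2 (hξ : Measurable ξ) (hη : Measurable η) (hξi : Integrable ξ P) (D : ℝ) (hD : 0 ≤ D)
    (hT : ∀ u v : ℝ, ‖∫ ω, (ξ ω : ℂ) * Complex.exp (Complex.I * ((u * ξ ω + v * η ω : ℝ) : ℂ)) ∂P - 
      (∫ ω, (ξ ω : ℂ) * Complex.exp (Complex.I * ((u * ξ ω : ℝ) : ℂ)) ∂P) * 
      (∫ ω, Complex.exp (Complex.I * ((v * η ω : ℝ) : ℂ)) ∂P)‖ ≤ D * ((1 + u ^ 2)⁻¹ * (1 + v ^ 2)⁻¹))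
    (L : ℝ → ℝ) (hLm : Measurable L) (B : ℝ) (hB : ∀ x, |L x| ≤ B) (hL : Integrable L)
    (b c β : ℝ) (hb : 1 ≤ b) (hc : 0 ≤ c) (hβ0 : 0 < β) (hβ1 : β < 1)
    (k : ℝ → ℝ) (hki : Integrable k) 
    (hk : ∀ v : ℝ, v ≠ 0 → min (b ^ (β - 1) / |v|) (|v| ^ (-β) / β) * (1 + v ^ 2)⁻¹ ≤ k v)
    (M : ℝ → ℝ) (hMm : Measurable M) (B' : ℝ) (hB' : ∀ x, |M x| ≤ B') (hMi : Integrable M)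
    (hM0 : ∀ x ≤ b, M x = 0) (hMn : ∀ x, 0 ≤ M x) (hanti : AntitoneOn M (Ioi b)) 
    (hMc : ∀ x, b < x → M x ≤ c * x ^ (β - 1)) :
    |(∫ ω, ξ ω * M (ξ ω) * L (η ω) ∂P) - (∫ ω, ξ ω * M (ξ ω) ∂P) * (∫ ω, L (η ω) ∂P)| ≤ 
      π * D * c * (∫ v, k v) * (∫ x, |L x|) := by
  set m := ∫ ω, L (η ω) ∂P with hm
  have hLη : Integrable (fun ω => (L (η ω))) P := by
    refine Integrable.of_bound (C := B) (by fun_prop : Measurable _).aestronglyMeasurable ?_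
    filter_upwards with ω using hB _
  have hW' : Integrable (fun ω => ξ ω * (L (η ω) - m)) P := by
    refine hξi.mul_bdd (c := B + |m|) (by fun_prop : Measurable _).aestronglyMeasurable ?_
    filter_upwards with ω
    exact (abs_sub _ _).trans (by gcongr; exact hB _)
  set W : Ω → ℂ := fun ω => ((ξ ω : ℝ) : ℂ) * ((L (η ω) : ℂ) - (m : ℂ)) with hWd
  have hW : Integrable W P := by
    have := hW'.ofReal (𝕜 := ℂ)
    refine this.congr ?_
    filter_upwards with ω
    simp [hWd]
  have hF : ∀ u : ℝ, ‖∫ ω, W ω * Complex.exp (Complex.I * ((2 * π * u * ξ ω : ℝ) : ℂ)) ∂P‖ ≤ _ := 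
    fun u => core1 hξ hη hξi D hD hT L hLm B hB hL u
  have hwi : Integrable (fun v : ℝ => ∫ ω, W ω * Complex.exp (Complex.I * ((2 * π * v * ξ ω : ℝ) : ℂ)) ∂P) := by
    refine (integrable_inv_one_add_sq.const_mul (π * D * (∫ x, |L x|))).mono' 
      (cont_w hW hξ).aestronglyMeasurable ?_
    filter_upwards with v using hF v
  have hp := pars P ξ hξ W hW hwi (fun x => (M x : ℂ)) (by fun_prop) B' 
    (fun x => by rw [Complex.norm_real]; exact hB' x) hMi.ofReal
  have hξM : Integrable (fun ω => ξ ω * M (ξ ω)) P := by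
    refine hξi.mul_bdd (c := B') (by fun_prop : Measurable _).aestronglyMeasurable ?_
    filter_upwards with ω using hB' _
  have hξML : Integrable (fun ω => ξ ω * M (ξ ω) * L (η ω)) P := by
    refine hξM.mul_bdd (c := B) (by fun_prop : Measurable _).aestronglyMeasurable ?_
    filter_upwards with ω using hB _
  have e1 : ((∫ ω, ξ ω * M (ξ ω) * L (η ω) ∂P) - (∫ ω, ξ ω * M (ξ ω) ∂P) * m : ℝ) = 
      ∫ ω, ξ ω * (L (η ω) - m) * M (ξ ω) ∂P := by
    rw [← integral_mul_const, ← integral_sub hξML (hξM.mul_const _)]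
    congr 1; ext ω; ring
  have e2 : ((∫ ω, ξ ω * (L (η ω) - m) * M (ξ ω) ∂P : ℝ) : ℂ) = ∫ ω, W ω * (M (ξ ω) : ℂ) ∂P := by
    rw [← integral_complex_ofReal]
    congr 1; ext ω; simp [hWd]
  rw [e1, ← Real.norm_eq_abs, ← Complex.norm_real, e2, hp]
  have hL0 : 0 ≤ ∫ x, |L x| := integral_nonneg fun x => abs_nonneg _
  calc _ ≤ ∫ v : ℝ, (π * D * (∫ x, |L x|) * c) * k v := by
        refine norm_integral_le_of_norm_le (hki.const_mul _) ?_
        filter_upwards [Measure.ae_ne volume (0:ℝ)] with v hv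
        rw [norm_mul]
        obtain ⟨h1, h2⟩ := four_M_bounds b v c β hb hc hβ0 hβ1 hv M hM0 hMn hanti hMi hMc
        have h3 : ‖FourierTransform.fourier (fun x => (M x : ℂ)) v‖ ≤ 
            c * min (b ^ (β - 1) / |v|) (|v| ^ (-β) / β) := by
          rw [mul_min_of_nonneg _ _ hc]; exact le_min h1 h2
        calc _ ≤ (π * D * (∫ x, |L x|) * (1 + v ^ 2)⁻¹) * (c * min (b ^ (β - 1) / |v|) (|v| ^ (-β) / β)) := by
              gcongr
              exact hF v
          _ = (π * D * (∫ x, |L x|) * c) * (min (b ^ (β - 1) / |v|) (|v| ^ (-β) / β) * (1 + v ^ 2)⁻¹) := by ring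
          _ ≤ _ := by
              have := hk v hv
              have hp := Real.pi_pos
              gcongr
    _ = _ := by
        rw [integral_const_mul]; ring
end

section
variable {Ω : Type*} [MeasurableSpace Ω] {P : Measure Ω} [IsProbabilityMeasure P] {η : Ω → ℝ}

/-- Bounded test functions give integrability for all integrable `L`. -/
lemma ext_int (hη : Measurable η) (X : Ω → ℝ) (hXm : Measurable X) (hX0 : ∀ ω, 0 ≤ X ω) 
    (hXi : Integrable X P) (A : ℝ) (hA : 0 < A)
    (h : ∀ L : ℝ → ℝ, Measurable L → (∀ x, 0 ≤ L x ∧ L x ≤ 1) → Integrable L → 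
      ∫ ω, X ω * L (η ω) ∂P ≤ A * ∫ x, L x) (L : ℝ → ℝ) (hL : Integrable L) : 
    Integrable (fun ω => X ω * L (η ω)) P ∧ 
    ((P.withDensity (fun ω => ENNReal.ofReal (X ω))).map η ≪ volume) := by
  set ν := (P.withDensity (fun ω => ENNReal.ofReal (X ω))).map η with hν
  have hle : ν ≤ ENNReal.ofReal A • (volume : Measure ℝ) := by
    refine Measure.le_iff.2 fun s hs => ?_
    rw [Measure.smul_apply, smul_eq_mul]
    by_cases hv : volume s = ⊤
    · rw [hv, ENNReal.mul_top (by simpa using hA)]; exact le_top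
    have hi : Integrable (s.indicator (fun _ => (1:ℝ))) := 
      (integrable_indicator_iff hs).2 (integrableOn_const hv)
    have h1 := h (s.indicator (fun _ => 1)) (measurable_const.indicator hs) (fun x => by
      by_cases hx : x ∈ s <;> simp [hx]) hi
    rw [integral_indicator_const _ hs, smul_eq_mul, mul_one] at h1
    rw [hν, Measure.map_apply hη hs, withDensity_apply _ (hη hs)]
    have e : ∀ ω, X ω * s.indicator (fun _ => (1:ℝ)) (η ω) = (η ⁻¹' s).indicator X ω := by
      intro ω
      by_cases hx : η ω ∈ s
      · rw [indicator_of_mem hx, indicator_of_mem (by exact hx), mul_one]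
      · rw [indicator_of_notMem hx, indicator_of_notMem (by exact hx), mul_zero]
    simp only [e] at h1
    rw [integral_indicator (hη hs)] at h1
    rw [← ofReal_integral_eq_lintegral_ofReal hXi.integrableOn (Eventually.of_forall hX0)]
    refine (ENNReal.ofReal_le_ofReal h1).trans (le_of_eq ?_)
    rw [ENNReal.ofReal_mul hA.le, Measure.real, ENNReal.ofReal_toReal hv]
  have hac : ν ≪ volume := by
    refine (Measure.absolutelyContinuous_of_le hle).trans ?_
    exact Measure.smul_absolutelyContinuous
  refine ⟨?_, hac⟩
  have h2 : Integrable L ν := (hL.smul_measure ENNReal.ofReal_ne_top).mono_measure hle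
  rw [hν, integrable_map_measure (hL.1.mono_ac hac) hη.aemeasurable,
    integrable_withDensity_iff (by fun_prop) (Eventually.of_forall fun _ => ENNReal.ofReal_lt_top)] at h2
  refine h2.congr ?_
  filter_upwards with ω
  simp only [Function.comp]
  rw [ENNReal.toReal_ofReal (hX0 ω), mul_comm]

/-- The law of `η` has a bounded density. -/
lemma eta_dens (hη : Measurable η) (A : ℝ) (hA : 0 < A)
    (h : ∀ L : ℝ → ℝ, Measurable L → (∀ x, 0 ≤ L x ∧ L x ≤ 1) → Integrable L → 
      ∫ ω, L (η ω) ∂P ≤ A * ∫ x, L x) (L : ℝ → ℝ) (hL : Integrable L) : 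
    Integrable (fun ω => L (η ω)) P ∧ (P.map η ≪ volume) := by
  have := ext_int (P := P) hη (fun _ => 1) measurable_const (fun _ => zero_le_one) (integrable_const _) A hA 
    (by simpa using h) L hL
  simpa using this

lemma ext_cov (hη : Measurable η) (X : Ω → ℝ) (hXm : Measurable X) (hX0 : ∀ ω, 0 ≤ X ω) 
    (hXi : Integrable X P) (A Q : ℝ) (hA : 0 < A) (hQ : 0 ≤ Q)
    (h : ∀ L : ℝ → ℝ, Measurable L → (∀ x, 0 ≤ L x ∧ L x ≤ 1) → Integrable L → 
      ∫ ω, L (η ω) ∂P ≤ A * ∫ x, L x) 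
    (hc : ∀ L : ℝ → ℝ, Measurable L → (∃ B, ∀ x, |L x| ≤ B) → Integrable L → 
      |∫ ω, X ω * L (η ω) ∂P - (∫ ω, X ω ∂P) * ∫ ω, L (η ω) ∂P| ≤ Q * ∫ x, |L x|)
    (L : ℝ → ℝ) (hL : Integrable L) : 
    Integrable (fun ω => X ω * L (η ω)) P ∧ 
    |∫ ω, X ω * L (η ω) ∂P - (∫ ω, X ω ∂P) * ∫ ω, L (η ω) ∂P| ≤ Q * ∫ x, |L x| := by
  have hEX : 0 ≤ ∫ ω, X ω ∂P := integral_nonneg hX0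
  have hinteg : ∀ L : ℝ → ℝ, Integrable L → Integrable (fun ω => X ω * L (η ω)) P := by
    intro L hL
    refine (ext_int (P := P) hη X hXm hX0 hXi (Q + (∫ ω, X ω ∂P) * A + 1) (by positivity) ?_ L hL).1
    intro L hLm hL01 hLi
    have h1 := h L hLm hL01 hLi
    have h2 := hc L hLm ⟨1, fun x => abs_le.2 ⟨by linarith [(hL01 x).1], (hL01 x).2⟩⟩ hLi
    have e : ∫ x, |L x| = ∫ x, L x := by congr 1; ext x; exact abs_of_nonneg (hL01 x).1
    have h0 : 0 ≤ ∫ x, L x := integral_nonneg fun x => (hL01 x).1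
    rw [e] at h2
    have h3 := (abs_le.1 h2).2
    have h4 := mul_le_mul_of_nonneg_left h1 hEX
    nlinarith
  refine ⟨hinteg L hL, ?_⟩
  set L' := hL.1.mk L with hL'
  have hL'm : Measurable L' := hL.1.stronglyMeasurable_mk.measurable
  have hae : L =ᵐ[volume] L' := hL.1.ae_eq_mk
  have hL'i : Integrable L' := hL.congr hae
  have hac := (eta_dens (P := P) hη A hA h L hL).2
  have hLη := (eta_dens (P := P) hη A hA h L' hL'i).1
  have haeη : ∀ᵐ ω ∂P, L (η ω) = L' (η ω) := ae_of_ae_map hη.aemeasurable (hac.ae_le hae)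
  have q1 : ∫ ω, X ω * L (η ω) ∂P = ∫ ω, X ω * L' (η ω) ∂P := by
    refine integral_congr_ae ?_
    filter_upwards [haeη] with ω hω
    rw [hω]
  have q2 : ∫ ω, L (η ω) ∂P = ∫ ω, L' (η ω) ∂P := integral_congr_ae haeη
  have q3 : ∫ x, |L x| = ∫ x, |L' x| := by
    refine integral_congr_ae ?_
    filter_upwards [hae] with ω hω
    rw [hω]
  rw [q1, q2, q3]
  set T : ℕ → ℝ → ℝ := fun n x => max (-(n:ℝ)) (min (L' x) n) with hT
  have hTm : ∀ n, Measurable (T n) := fun n => by fun_prop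
  have hTb : ∀ n x, |T n x| ≤ n := by
    intro n x
    have hn : (0:ℝ) ≤ n := n.cast_nonneg
    rw [abs_le]
    exact ⟨le_max_left _ _, max_le (by linarith) (min_le_right _ _)⟩
  have hTL : ∀ n x, |T n x| ≤ |L' x| := by
    intro n x
    have hn : (0:ℝ) ≤ n := n.cast_nonneg
    rw [abs_le]
    constructor
    · refine le_trans ?_ (le_max_right _ _)
      exact le_min (neg_abs_le _) (by linarith [abs_nonneg (L' x)])
    · exact max_le (by linarith [abs_nonneg (L' x)]) ((min_le_left _ _).trans (le_abs_self _))
  have hTt : ∀ x, Tendsto (fun n => T n x) atTop (𝓝 (L' x)) := by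
    intro x
    refine tendsto_const_nhds.congr' ?_
    filter_upwards [eventually_ge_atTop ⌈|L' x|⌉₊] with n hn
    have : |L' x| ≤ n := (Nat.le_ceil _).trans (by exact_mod_cast hn)
    rw [abs_le] at this
    simp only [hT]
    rw [min_eq_left this.2, max_eq_right this.1]
  have hTi : ∀ n, Integrable (T n) := fun n => hL'i.mono (hTm n).aestronglyMeasurable 
    (Eventually.of_forall fun x => hTL n x)
  have t1 : Tendsto (fun n => ∫ ω, X ω * T n (η ω) ∂P) atTop (𝓝 (∫ ω, X ω * L' (η ω) ∂P)) := by
    refine tendsto_integral_of_dominated_convergence (fun ω => |X ω * L' (η ω)|) ?_ (hinteg L' hL'i).abs ?_ ?_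
    · intro n
      have := hTm n
      exact (by fun_prop : Measurable _).aestronglyMeasurable
    · intro n
      filter_upwards with ω
      rw [Real.norm_eq_abs, abs_mul, abs_mul]
      have := hTL n (η ω)
      gcongr
    · filter_upwards with ω
      exact (hTt (η ω)).const_mul _
  have t2 : Tendsto (fun n => ∫ ω, T n (η ω) ∂P) atTop (𝓝 (∫ ω, L' (η ω) ∂P)) := by
    refine tendsto_integral_of_dominated_convergence (fun ω => |L' (η ω)|) ?_ hLη.abs ?_ ?_
    · intro n
      have := hTm n
      exact (by fun_prop : Measurable _).aestronglyMeasurable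
    · intro n
      filter_upwards with ω
      exact hTL n (η ω)
    · filter_upwards with ω
      exact (hTt (η ω))
  refine le_of_tendsto (t1.sub (t2.const_mul _)).abs ?_
  filter_upwards with n
  refine (hc (T n) (hTm n) ⟨n, hTb n⟩ (hTi n)).trans ?_
  refine mul_le_mul_of_nonneg_left ?_ hQ
  exact integral_mono (hTi n).abs hL'i.abs (hTL n)
end

lemma N_nonneg (H : ℝ → ℝ) (b c β : ℝ) (hβ1 : β < 1) (hanti : AntitoneOn H (Ioi b))
    (hc : ∀ x, b < x → |H x| ≤ c * x ^ (β - 1)) (x : ℝ) (hx : b < x) : 0 ≤ H x := by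
  have ht : Tendsto (fun y : ℝ => -(c * y ^ (β - 1))) atTop (𝓝 0) := by
    have := ((tendsto_rpow_neg_atTop (by linarith : 0 < 1 - β)).const_mul c).neg
    simpa using this
  refine le_of_tendsto ht ?_
  filter_upwards [eventually_ge_atTop x] with y hy
  have h1 := hanti hx (lt_of_lt_of_le hx hy) hy
  have h2 := (abs_le.1 (hc y (lt_of_lt_of_le hx hy))).1
  linarith

lemma N_meas (N : ℝ → ℝ) (b : ℝ) (hN0 : ∀ x ≤ b, N x = 0) (hNn : ∀ x, 0 ≤ N x) 
    (hanti : AntitoneOn N (Ioi b)) : Measurable N := by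
  refine measurable_of_Ioi fun a => ?_
  rcases lt_or_ge a 0 with ha | ha
  · have : N ⁻¹' Ioi a = univ := by
      ext x; simp only [mem_preimage, mem_Ioi, mem_univ, iff_true]; exact ha.trans_le (hNn x)
    rw [this]; exact MeasurableSet.univ
  · refine Set.OrdConnected.measurableSet ⟨fun x hx y hy z hz => ?_⟩
    have hb : ∀ w, w ∈ N ⁻¹' Ioi a → b < w := by
      intro w hw
      by_contra hcon
      have := hN0 w (not_lt.1 hcon)
      simp only [mem_preimage, mem_Ioi] at hw
      linarith
    have h1 := hb x hx
    have h2 := hanti (lt_of_lt_of_le h1 hz.1) (hb y hy) hz.2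
    exact lt_of_lt_of_le hy h2

section
variable {Ω : Type*} [MeasurableSpace Ω] {P : Measure Ω} [IsProbabilityMeasure P] {ξ η : Ω → ℝ}

lemma one_sided (hξ : Measurable ξ) (hη : Measurable η) (hξi : Integrable ξ P) (D : ℝ) (hD : 0 ≤ D)
    (hT : ∀ u v : ℝ, ‖∫ ω, (ξ ω : ℂ) * Complex.exp (Complex.I * ((u * ξ ω + v * η ω : ℝ) : ℂ)) ∂P - 
      (∫ ω, (ξ ω : ℂ) * Complex.exp (Complex.I * ((u * ξ ω : ℝ) : ℂ)) ∂P) * 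
      (∫ ω, Complex.exp (Complex.I * ((v * η ω : ℝ) : ℂ)) ∂P)‖ ≤ D * ((1 + u ^ 2)⁻¹ * (1 + v ^ 2)⁻¹))
    (A : ℝ) (hA : 0 < A)
    (h : ∀ L : ℝ → ℝ, Measurable L → (∀ x, 0 ≤ L x ∧ L x ≤ 1) → Integrable L → 
      ∫ ω, L (η ω) ∂P ≤ A * ∫ x, L x) 
    (b c β : ℝ) (hb : 1 ≤ b) (hc : 0 ≤ c) (hβ0 : 0 < β) (hβ1 : β < 1)
    (k : ℝ → ℝ) (hki : Integrable k) 
    (hk : ∀ v : ℝ, v ≠ 0 → min (b ^ (β - 1) / |v|) (|v| ^ (-β) / β) * (1 + v ^ 2)⁻¹ ≤ k v)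
    (N : ℝ → ℝ) (hN0 : ∀ x ≤ b, N x = 0) (hNn : ∀ x, 0 ≤ N x) (hanti : AntitoneOn N (Ioi b)) 
    (hNc : ∀ x, b < x → N x ≤ c * x ^ (β - 1)) (L : ℝ → ℝ) (hL : Integrable L) :
    Integrable (fun ω => ξ ω * N (ξ ω)) P ∧ Integrable (fun ω => ξ ω * N (ξ ω) * L (η ω)) P ∧ 
    |(∫ ω, ξ ω * N (ξ ω) * L (η ω) ∂P) - (∫ ω, ξ ω * N (ξ ω) ∂P) * (∫ ω, L (η ω) ∂P)| ≤ 
      π * D * c * (∫ v, k v) * (∫ x, |L x|) := by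
  have hNm := N_meas N b hN0 hNn hanti
  have hNb : ∀ x, |N x| ≤ c := by
    intro x
    rw [abs_of_nonneg (hNn x)]
    rcases le_or_gt x b with hx | hx
    · rw [hN0 x hx]; exact hc
    · refine (hNc x hx).trans ?_
      have : x ^ (β - 1) ≤ 1 := Real.rpow_le_one_of_one_le_of_nonpos (by linarith) (by linarith)
      nlinarith
  have hXi : Integrable (fun ω => ξ ω * N (ξ ω)) P := by
    refine hξi.mul_bdd (c := c) (by fun_prop : Measurable _).aestronglyMeasurable ?_
    filter_upwards with ω using hNb _
  have hX0 : ∀ ω, 0 ≤ ξ ω * N (ξ ω) := by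
    intro ω
    rcases le_or_gt (ξ ω) b with hx | hx
    · rw [hN0 _ hx, mul_zero]
    · exact mul_nonneg (by linarith) (hNn _)
  have hk0 : 0 ≤ ∫ v, k v := by
    refine integral_nonneg_of_ae ?_
    filter_upwards [Measure.ae_ne volume (0:ℝ)] with v hv
    refine le_trans ?_ (hk v hv)
    positivity
  have hpi := Real.pi_pos
  refine ⟨hXi, ext_cov hη (fun ω => ξ ω * N (ξ ω)) (by fun_prop) hX0 hXi A (π * D * c * (∫ v, k v)) hA 
    (by positivity) h ?_ L hL⟩
  clear hL L
  rintro L hLm ⟨B, hB⟩ hL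
  have hB0 : 0 ≤ B := (abs_nonneg _).trans (hB 0)
  have hXLi : Integrable (fun ω => ξ ω * N (ξ ω) * L (η ω)) P := by
    refine hXi.mul_bdd (c := B) (by fun_prop : Measurable _).aestronglyMeasurable ?_
    filter_upwards with ω using hB _
  set M : ℕ → ℝ → ℝ := fun n => (Iic (n:ℝ)).indicator N with hM
  have hMle : ∀ n x, 0 ≤ M n x ∧ M n x ≤ N x := by
    intro n x
    simp only [hM]
    by_cases hx : x ∈ Iic (n:ℝ)
    · rw [indicator_of_mem hx]; exact ⟨hNn x, le_rfl⟩
    · rw [indicator_of_notMem hx]; exact ⟨le_rfl, hNn x⟩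
  have hMm : ∀ n, Measurable (M n) := fun n => hNm.indicator measurableSet_Iic
  have hM0 : ∀ n, ∀ x ≤ b, M n x = 0 := fun n x hx => 
    le_antisymm ((hMle n x).2.trans (hN0 x hx).le) (hMle n x).1
  have hMb : ∀ n x, |M n x| ≤ c := by
    intro n x
    rw [abs_of_nonneg (hMle n x).1]
    exact (hMle n x).2.trans ((le_abs_self _).trans (hNb x))
  have hMi : ∀ n, Integrable (M n) := by
    intro n
    have hi : Integrable ((Icc b (n:ℝ)).indicator (fun _ => c)) := 
      (integrable_indicator_iff measurableSet_Icc).2 (integrableOn_const (by simp))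
    refine hi.mono' (hMm n).aestronglyMeasurable ?_
    filter_upwards with x
    by_cases hx : x ∈ Icc b (n:ℝ)
    · rw [indicator_of_mem hx]; exact hMb n x
    · rw [indicator_of_notMem hx]
      rcases le_or_gt x b with hxb | hxb
      · rw [hM0 n x hxb, norm_zero]
      · have : x ∉ Iic (n:ℝ) := fun h' => hx ⟨hxb.le, h'⟩
        simp only [hM]
        rw [indicator_of_notMem this, norm_zero]
  have hMa : ∀ n, AntitoneOn (M n) (Ioi b) := by
    intro n x hx y hy hxy
    by_cases hyn : y ∈ Iic (n:ℝ)
    · have hxn : x ∈ Iic (n:ℝ) := le_trans hxy hyn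
      simp only [hM]
      rw [indicator_of_mem hyn, indicator_of_mem hxn]
      exact hanti hx hy hxy
    · have : M n y = 0 := indicator_of_notMem hyn _
      rw [this]; exact (hMle n x).1
  have hMt : ∀ x, Tendsto (fun n => M n x) atTop (𝓝 (N x)) := by
    intro x
    refine tendsto_const_nhds.congr' ?_
    filter_upwards [eventually_ge_atTop ⌈x⌉₊] with n hn
    have : x ∈ Iic (n:ℝ) := mem_Iic.2 ((Nat.le_ceil x).trans (by exact_mod_cast hn))
    simp only [hM]
    rw [indicator_of_mem this]
  have hMN : ∀ n ω, |ξ ω * M n (ξ ω)| ≤ |ξ ω * N (ξ ω)| := by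
    intro n ω
    rw [abs_mul, abs_mul, abs_of_nonneg (hMle n _).1, abs_of_nonneg (hNn _)]
    exact mul_le_mul_of_nonneg_left (hMle n _).2 (abs_nonneg _)
  have t1 : Tendsto (fun n => ∫ ω, ξ ω * M n (ξ ω) * L (η ω) ∂P) atTop 
      (𝓝 (∫ ω, ξ ω * N (ξ ω) * L (η ω) ∂P)) := by
    refine tendsto_integral_of_dominated_convergence (fun ω => |ξ ω * N (ξ ω) * L (η ω)|) ?_ hXLi.abs ?_ ?_
    · intro n
      have := hMm n
      exact (by fun_prop : Measurable _).aestronglyMeasurable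
    · intro n
      filter_upwards with ω
      rw [Real.norm_eq_abs, abs_mul, abs_mul (ξ ω * N (ξ ω))]
      exact mul_le_mul_of_nonneg_right (hMN n ω) (abs_nonneg _)
    · filter_upwards with ω
      exact ((hMt (ξ ω)).const_mul _).mul_const _
  have t2 : Tendsto (fun n => ∫ ω, ξ ω * M n (ξ ω) ∂P) atTop 
      (𝓝 (∫ ω, ξ ω * N (ξ ω) ∂P)) := by
    refine tendsto_integral_of_dominated_convergence (fun ω => |ξ ω * N (ξ ω)|) ?_ hXi.abs ?_ ?_
    · intro n
      have := hMm n
      exact (by fun_prop : Measurable _).aestronglyMeasurable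
    · intro n
      filter_upwards with ω
      exact hMN n ω
    · filter_upwards with ω
      exact ((hMt (ξ ω)).const_mul _)
  refine le_of_tendsto (t1.sub (t2.mul_const _)).abs ?_
  filter_upwards with n
  exact core2 hξ hη hξi D hD hT L hLm B hB hL b c β hb hc hβ0 hβ1 k hki hk (M n) (hMm n) c (hMb n) (hMi n)
    (hM0 n) (fun x => (hMle n x).1) (hMa n) (fun x hx => (hMle n x).2.trans (hNc x hx))

lemma two_sided (hξ : Measurable ξ) (hη : Measurable η) (hξi : Integrable ξ P) (D : ℝ) (hD : 0 ≤ D)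
    (hT : ∀ u v : ℝ, ‖∫ ω, (ξ ω : ℂ) * Complex.exp (Complex.I * ((u * ξ ω + v * η ω : ℝ) : ℂ)) ∂P - 
      (∫ ω, (ξ ω : ℂ) * Complex.exp (Complex.I * ((u * ξ ω : ℝ) : ℂ)) ∂P) * 
      (∫ ω, Complex.exp (Complex.I * ((v * η ω : ℝ) : ℂ)) ∂P)‖ ≤ D * ((1 + u ^ 2)⁻¹ * (1 + v ^ 2)⁻¹))
    (A : ℝ) (hA : 0 < A)
    (h : ∀ L : ℝ → ℝ, Measurable L → (∀ x, 0 ≤ L x ∧ L x ≤ 1) → Integrable L → 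
      ∫ ω, L (η ω) ∂P ≤ A * ∫ x, L x) 
    (b c β : ℝ) (hb : 1 ≤ b) (hc : 0 ≤ c) (hβ0 : 0 < β) (hβ1 : β < 1)
    (k : ℝ → ℝ) (hki : Integrable k) 
    (hk : ∀ v : ℝ, v ≠ 0 → min (b ^ (β - 1) / |v|) (|v| ^ (-β) / β) * (1 + v ^ 2)⁻¹ ≤ k v)
    (K L : ℝ → ℝ) (hK : ∀ x : ℝ, b < |x| → |K x| ≤ c * |x| ^ β)
    (hK1 : AntitoneOn (fun x => K x / x) (Set.Ioi b))
    (hK2 : MonotoneOn (fun x => K x / x) (Set.Iio (-b))) (hL : Integrable L) :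
    |(∫ ω, (if b < |ξ ω| then K (ξ ω) else 0) * L (η ω) ∂P) -
        (∫ ω, (if b < |ξ ω| then K (ξ ω) else 0) ∂P) * (∫ ω, L (η ω) ∂P)|
      ≤ 2 * (π * D * c * (∫ v, k v) * (∫ x, |L x|)) := by
  have hKx : ∀ x, b < |x| → |K x / x| ≤ c * |x| ^ (β - 1) := by
    intro x hx
    have hx0 : 0 < |x| := by linarith
    rw [abs_div, div_le_iff₀ hx0, mul_assoc, ← Real.rpow_add_one hx0.ne', sub_add_cancel]
    exact hK x hx
  set N1 : ℝ → ℝ := fun x => if b < x then K x / x else 0 with hN1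
  set N2 : ℝ → ℝ := fun x => if b < x then K (-x) / (-x) else 0 with hN2
  have a1 : ∀ x, b < x → N1 x = K x / x := fun x hx => if_pos hx
  have a2 : ∀ x, b < x → N2 x = K (-x) / (-x) := fun x hx => if_pos hx
  have b1 : ∀ x ≤ b, N1 x = 0 := fun x hx => if_neg (not_lt.2 hx)
  have b2 : ∀ x ≤ b, N2 x = 0 := fun x hx => if_neg (not_lt.2 hx)
  have c1 : ∀ x, b < x → |N1 x| ≤ c * x ^ (β - 1) := by
    intro x hx
    have hx' : |x| = x := abs_of_pos (by linarith)
    have := hKx x (by rwa [hx'])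
    rw [a1 x hx]; rwa [hx'] at this
  have c2 : ∀ x, b < x → |N2 x| ≤ c * x ^ (β - 1) := by
    intro x hx
    have hx' : |-x| = x := by rw [abs_neg]; exact abs_of_pos (by linarith)
    have := hKx (-x) (by rwa [hx'])
    rw [a2 x hx]; rwa [hx'] at this
  have d1 : AntitoneOn N1 (Ioi b) := by
    intro x hx y hy hxy
    rw [a1 x hx, a1 y hy]
    exact hK1 hx hy hxy
  have d2 : AntitoneOn N2 (Ioi b) := by
    intro x hx y hy hxy
    rw [a2 x hx, a2 y hy]
    exact hK2 (mem_Iio.2 (neg_lt_neg hy)) (mem_Iio.2 (neg_lt_neg hx)) (neg_le_neg hxy)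
  have p1 : ∀ x, 0 ≤ N1 x := by
    intro x
    rcases le_or_gt x b with hx | hx
    · rw [b1 x hx]
    · exact N_nonneg N1 b c β hβ1 d1 c1 x hx
  have p2 : ∀ x, 0 ≤ N2 x := by
    intro x
    rcases le_or_gt x b with hx | hx
    · rw [b2 x hx]
    · exact N_nonneg N2 b c β hβ1 d2 c2 x hx
  have hT' : ∀ u v : ℝ, ‖∫ ω, ((-ξ ω : ℝ) : ℂ) * Complex.exp (Complex.I * ((u * (-ξ ω) + v * η ω : ℝ) : ℂ)) ∂P - 
      (∫ ω, ((-ξ ω : ℝ) : ℂ) * Complex.exp (Complex.I * ((u * (-ξ ω) : ℝ) : ℂ)) ∂P) * 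
      (∫ ω, Complex.exp (Complex.I * ((v * η ω : ℝ) : ℂ)) ∂P)‖ ≤ D * ((1 + u ^ 2)⁻¹ * (1 + v ^ 2)⁻¹) := by
    intro u v
    have := hT (-u) v
    rw [neg_sq] at this
    refine le_trans (le_of_eq ?_) this
    simp only [Complex.ofReal_neg (ξ _), neg_mul (ξ _ : ℂ), integral_neg, mul_neg u, ← neg_mul u]
    rw [← norm_neg]
    congr 1; ring
  obtain ⟨i1, j1, k1⟩ := one_sided hξ hη hξi D hD hT A hA h b c β hb hc hβ0 hβ1 k hki hk N1 b1 p1 d1 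
    (fun x hx => (le_abs_self _).trans (c1 x hx)) L hL
  obtain ⟨i2, j2, k2⟩ := one_sided (ξ := fun ω => -ξ ω) hξ.neg hη hξi.neg D hD hT' A hA h b c β hb hc hβ0 hβ1 
    k hki hk N2 b2 p2 d2 
    (fun x hx => (le_abs_self _).trans (c2 x hx)) L hL
  have e : ∀ ω, (if b < |ξ ω| then K (ξ ω) else 0) = ξ ω * N1 (ξ ω) - (-ξ ω) * N2 (-ξ ω) := by
    intro ω
    set x := ξ ω
    rcases le_or_gt x b with h1 | h1
    · rcases le_or_gt (-x) b with h2 | h2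
      · rw [if_neg (not_lt.2 (abs_le.2 ⟨by linarith, h1⟩)), b1 x h1, b2 _ h2]; ring
      · have hx : x ≠ 0 := by linarith
        rw [if_pos (lt_of_lt_of_le h2 (neg_le_abs x)), b1 x h1, a2 _ h2, neg_neg]
        field_simp; ring
    · have hx : x ≠ 0 := by linarith
      rw [if_pos (lt_of_lt_of_le h1 (le_abs_self x)), a1 x h1, b2 (-x) (by linarith)]
      field_simp; ring
  simp only [e, sub_mul (_ * _)]
  rw [integral_sub j1 j2, integral_sub i1 i2]
  have := abs_sub ((∫ ω, ξ ω * N1 (ξ ω) * L (η ω) ∂P) - (∫ ω, ξ ω * N1 (ξ ω) ∂P) * (∫ ω, L (η ω) ∂P))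
    ((∫ ω, -ξ ω * N2 (-ξ ω) * L (η ω) ∂P) - (∫ ω, -ξ ω * N2 (-ξ ω) ∂P) * (∫ ω, L (η ω) ∂P))
  calc _ = _ := by congr 1; ring
    _ ≤ _ := this
    _ ≤ _ := by linarith
end

lemma eta_A {α : ℝ} {S : Type*} [MeasurableSpace S] {μ : Measure S} {f g : S → ℝ} {Ω : Type*} [MeasurableSpace Ω]
    {P : Measure Ω} [IsProbabilityMeasure P] {ξ η : Ω → ℝ}
    (hα1 : 1 < α) (hη : Measurable η) (hg : 0 < nrm α μ g) (hJ : JointSAS α μ f g P ξ η) :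
    ∃ A > 0, ∀ L : ℝ → ℝ, Measurable L → (∀ x, 0 ≤ L x ∧ L x ≤ 1) → Integrable L → 
      ∫ ω, L (η ω) ∂P ≤ A * ∫ x, L x := by
  have hc : 0 < nrm α μ g ^ α := by positivity
  obtain ⟨B, hB, hdec⟩ := decay (nrm α μ g ^ α) α 0 hc hα1 le_rfl
  refine ⟨B * π, by positivity, fun L hLm hL01 hLi => ?_⟩
  have hw : ∀ v : ℝ, ‖∫ ω, (1:ℂ) * Complex.exp (Complex.I * ((2 * π * v * η ω : ℝ) : ℂ)) ∂P‖ ≤ B * (1 + v ^ 2)⁻¹ := by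
    intro v
    have h3 := J_NN hα1 hJ 0 (2 * π * v)
    simp only [zero_mul, zero_add] at h3
    simp only [one_mul]
    rw [h3, ← Complex.ofReal_neg, ← Complex.ofReal_exp, Complex.norm_real, 
      Real.norm_of_nonneg (Real.exp_pos _).le, NN_0v, ← nrm_pow α (by linarith)]
    have h1 := hdec (2 * π * v)
    rw [Real.rpow_zero, one_mul] at h1
    rw [mul_comm (|_| ^ α)]
    refine h1.trans ?_
    exact mul_le_mul_of_nonneg_left (inv_scale v) hB.le
  have hW : Integrable (fun _ : Ω => (1:ℂ)) P := integrable_const _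
  have hwi : Integrable (fun v : ℝ => ∫ ω, (1:ℂ) * Complex.exp (Complex.I * ((2 * π * v * η ω : ℝ) : ℂ)) ∂P) := by
    refine (integrable_inv_one_add_sq.const_mul B).mono' (cont_w hW hη).aestronglyMeasurable ?_
    filter_upwards with v using hw v
  have hp := pars P η hη (fun _ => 1) hW hwi (fun x => (L x : ℂ)) (by fun_prop) 1 
    (fun x => by rw [Complex.norm_real, Real.norm_of_nonneg (hL01 x).1]; exact (hL01 x).2) hLi.ofReal
  have e : ((∫ ω, L (η ω) ∂P : ℝ) : ℂ) = ∫ ω, 1 * (L (η ω) : ℂ) ∂P := by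
    simp only [one_mul]; exact integral_complex_ofReal.symm
  refine (le_abs_self _).trans ?_
  rw [← Real.norm_eq_abs, ← Complex.norm_real, e, hp]
  calc _ ≤ ∫ v : ℝ, (B * (∫ x, L x)) * (1 + v ^ 2)⁻¹ := by
        refine norm_integral_le_of_norm_le (integrable_inv_one_add_sq.const_mul _) ?_
        filter_upwards with v
        rw [norm_mul]
        have h1 := norm_four_le (fun x => (L x : ℂ)) v
        have e : ∫ x, ‖(L x : ℂ)‖ = ∫ x, L x := by
          congr 1; ext x; rw [Complex.norm_real, Real.norm_of_nonneg (hL01 x).1]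
        rw [e] at h1
        calc _ ≤ (B * (1 + v ^ 2)⁻¹) * (∫ x, L x) := by
              gcongr
              exact hw v
          _ = _ := by ring
    _ = _ := by
        rw [integral_const_mul, integral_univ_inv_one_add_sq]; ring

/-- Paper's Theorem 2.3. -/
theorem stmt4 (α β ε₁ ε₂ nf ng cK : ℝ) (hα1 : 1 < α) (hα2 : α < 2)
    (hβ0 : 0 < β) (hβ : β < α / 2) (hε₁ : 0 < ε₁) (hε₂ : 0 < ε₂)
    (hnf : 0 < nf) (hng : 0 < ng) :
    ∃ C > (0:ℝ), ∀ (S : Type) [MeasurableSpace S] (μ : Measure S) [SigmaFinite μ]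
      (f g : S → ℝ), MemLalpha α μ f → MemLalpha α μ g →
      nrm α μ f = nf → nrm α μ g = ng → A1 α ε₁ μ f g → A2 α ε₂ μ f g →
      ∀ (Ω : Type) [MeasurableSpace Ω] (P : Measure Ω) [IsProbabilityMeasure P]
        (ξ η : Ω → ℝ), Measurable ξ → Measurable η → JointSAS α μ f g P ξ η →
        ∀ b : ℝ, 1 ≤ b →
        ∀ K L : ℝ → ℝ,
          (∀ x : ℝ, b < |x| → |K x| ≤ cK * |x| ^ β) →
          AntitoneOn (fun x => K x / x) (Set.Ioi b) →
          MonotoneOn (fun x => K x / x) (Set.Iio (-b)) →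
          Integrable L volume →
          |(∫ ω, (if b < |ξ ω| then K (ξ ω) else 0) * L (η ω) ∂P) -
              (∫ ω, (if b < |ξ ω| then K (ξ ω) else 0) ∂P) * (∫ ω, L (η ω) ∂P)|
            ≤ C * b ^ (β - 1) * Real.log (b + 1) * (∫ x, |L x|) *
                (dep1s α μ g f + dep2 α μ f g) := by
  have hβ1 : β < 1 := by linarith
  obtain ⟨C1, hC1, hR⟩ := R_bound α ε₂ nf ng hα1 hα2 hε₂ hnf hng
  obtain ⟨Ck, hCk, hkern⟩ := kern β hβ0 hβ1
  have hpi := Real.pi_pos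
  refine ⟨2 * (π * C1 * (|cK| + 1) * Ck), by positivity, ?_⟩
  intro S _ μ _ f g hf hg hfn hgn _ hA2 Ω _ P _ ξ η hξ hη hJ b hb K L hK hK1 hK2 hL
  obtain ⟨k, hki, hk, hkb⟩ := hkern b hb
  obtain ⟨A, hA, hdens⟩ := eta_A hα1 hη (by rw [hgn]; exact hng) hJ
  set D := dep1s α μ g f + dep2 α μ f g with hD
  have hD0 : 0 ≤ D := add_nonneg (dep1s_nonneg _ _ _) (dep2_nonneg _ _ _)
  have hK' : ∀ x : ℝ, b < |x| → |K x| ≤ (|cK| + 1) * |x| ^ β := by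
    intro x hx
    refine (hK x hx).trans ?_
    have : cK ≤ |cK| + 1 := by linarith [le_abs_self cK]
    gcongr
  have hmain := two_sided hξ hη (xi_int hα1 hξ hJ) (C1 * D) (by positivity) (fun u v => by
    rw [T_eq hα1 hf hg hξ hη hJ u v]
    exact hR S μ f g hf hg hfn hgn hA2 u v) A hA hdens b (|cK| + 1) β hb (by positivity) hβ0 hβ1 k hki hk
    K L hK' hK1 hK2 hL
  refine hmain.trans ?_
  have hL0 : 0 ≤ ∫ x, |L x| := integral_nonneg fun x => abs_nonneg _
  calc 2 * (π * (C1 * D) * (|cK| + 1) * (∫ v, k v) * (∫ x, |L x|)) 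
      ≤ 2 * (π * (C1 * D) * (|cK| + 1) * (Ck * b ^ (β - 1) * Real.log (b + 1)) * (∫ x, |L x|)) := by
        gcongr
    _ = _ := by ring
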